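/- Let q be an even prime power with q ≥ 2048. Then every complete k-cap in PG(3, q) with k < q² + 1 satisfies k < q² − 2q + 3√q + 2 (so m′₂(3, q) < q² − 2q + 3√q + 2). -/

import Mathlib

open Module

/-- Points of the projective space `PG(n, q)` over the field `F` (with `q = |F|`). -/
abbrev PGPoint (F : Type*) [Field F] (n : ℕ) := Projectivization F (Fin (n + 1) → F)

/-- The set of projective points lying in the projective subspace determined by
a linear subspace `W`. -/
def ptsIn {F : Type*} [Field F] {n : ℕ} (W : Submodule F (Fin (n + 1) → F)) :
    Set (PGPoint F n) := {P | P.submodule ≤ W}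

/-- Three points of `PG(n, q)` are collinear if they lie on a common line. -/
def Coll3 {F : Type*} [Field F] {n : ℕ} (P₁ P₂ P₃ : PGPoint F n) : Prop :=
  Module.finrank F ↥(P₁.submodule ⊔ P₂.submodule ⊔ P₃.submodule) ≤ 2

/-- A cap (a plane arc when `n = 2`): a set of points no three of which are collinear. -/
def IsCap {F : Type*} [Field F] {n : ℕ} (K : Set (PGPoint F n)) : Prop :=
  ∀ P₁ ∈ K, ∀ P₂ ∈ K, ∀ P₃ ∈ K, P₁ ≠ P₂ → P₁ ≠ P₃ → P₂ ≠ P₃ → ¬ Coll3 P₁ P₂ P₃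

/-- A complete cap: a cap that is not contained in a cap with one more point. -/
def IsCompleteCap {F : Type*} [Field F] {n : ℕ} (K : Set (PGPoint F n)) : Prop :=
  IsCap K ∧ ∀ P ∉ K, ¬ IsCap (insert P K)

/-- A tangent line of `K`: a line (2-dimensional linear subspace) meeting `K`
in exactly one point. -/
def IsTangent {F : Type*} [Field F] {n : ℕ} (K : Set (PGPoint F n))
    (W : Submodule F (Fin (n + 1) → F)) : Prop :=
  Module.finrank F W = 2 ∧ (ptsIn W ∩ K).ncard = 1

section AUX
open Finset

section CL
open Classical

theorem cap_part {α β : Type*} (S : Finset α) (I : Finset β) (R : β → α → Prop)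
    [∀ i, DecidablePred (R i)] (h : ∀ s ∈ S, ∃! i, i ∈ I ∧ R i s) :
    ∑ i ∈ I, (S.filter (R i)).card = S.card := by
  have := Finset.sum_card_bipartiteAbove_eq_sum_card_bipartiteBelow (s := I) (t := S) R
  simp only [Finset.bipartiteAbove, Finset.bipartiteBelow] at this
  have h0 : ∑ i ∈ I, (S.filter (R i)).card = ∑ i ∈ I, #({a ∈ S | R i a}) :=
    sum_congr rfl fun i _ => by congr
  rw [h0, this, Finset.card_eq_sum_ones]
  refine Finset.sum_congr rfl fun s hs => ?_
  obtain ⟨i, hi, hu⟩ := h s hs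
  rw [Finset.card_eq_one]
  refine ⟨i, ?_⟩
  ext j
  simp only [mem_filter, mem_singleton]
  exact ⟨fun hj => hu j hj, fun hj => hj ▸ hi⟩

variable {α β : Type*} (T : Finset α) (Λ : Finset β) (R : α → β → Prop)

noncomputable def mm (p : β) : ℕ := (T.filter (fun x => R x p)).card

variable (huniq : ∀ x ∈ T, ∀ y ∈ T, x ≠ y → ∃! p, p ∈ Λ ∧ R x p ∧ R y p)

include huniq in
theorem cl_inter {p p' : β} (hp : p ∈ Λ) (hp' : p' ∈ Λ) (hne : p ≠ p') :
    (T.filter (fun x => R x p ∧ R x p')).card ≤ 1 := by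
  rw [Finset.card_le_one]
  intro a ha b hb
  by_contra hab
  simp only [mem_filter] at ha hb
  obtain ⟨i, hi, hu⟩ := huniq a ha.1 b hb.1 hab
  exact hne ((hu p ⟨hp, ha.2.1, hb.2.1⟩).trans (hu p' ⟨hp', ha.2.2, hb.2.2⟩).symm)

include huniq in
theorem cl_union (J : Finset β) (hJ : J ⊆ Λ) :
    ∑ p ∈ J, mm T R p ≤ (T.filter (fun x => ∃ p ∈ J, R x p)).card + J.card ^ 2 := by
  induction J using Finset.induction_on with
  | empty => simp
  | insert p J hpJ ih =>
    have ih := ih (fun x hx => hJ (mem_insert_of_mem hx))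
    rw [sum_insert hpJ, card_insert_of_notMem hpJ]
    have hp : p ∈ Λ := hJ (mem_insert_self _ _)
    have h1 : mm T R p ≤ (T.filter (fun x => R x p ∧ ¬ ∃ p ∈ J, R x p)).card + J.card := by
      unfold mm
      have hsub : T.filter (fun x => R x p) ⊆
          T.filter (fun x => R x p ∧ ¬ ∃ p ∈ J, R x p) ∪
            J.biUnion (fun g => T.filter (fun x => R x p ∧ R x g)) := by
        intro x hx
        simp only [mem_filter, mem_union, mem_biUnion] at hx ⊢
        by_cases h : ∃ p ∈ J, R x p
        · right
          obtain ⟨g, hg, hxg⟩ := h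
          exact ⟨g, hg, hx.1, hx.2, hxg⟩
        · left; exact ⟨hx.1, hx.2, h⟩
      refine (card_le_card hsub).trans ((card_union_le _ _).trans ?_)
      gcongr
      refine (card_biUnion_le_card_mul _ _ 1 ?_).trans (by simp)
      intro g hg
      exact cl_inter T Λ R huniq hp (hJ (mem_insert_of_mem hg)) (fun h => hpJ (h ▸ hg))
    have h2 : (T.filter (fun x => R x p ∧ ¬ ∃ p ∈ J, R x p)).card +
        (T.filter (fun x => ∃ p ∈ J, R x p)).card ≤
        (T.filter (fun x => ∃ g ∈ insert p J, R x g)).card := by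
      rw [← card_union_of_disjoint]
      · apply card_le_card
        intro x
        simp only [mem_union, mem_filter, mem_insert]
        rintro (⟨a, b, c⟩ | ⟨a, g, hg, hx⟩)
        · exact ⟨a, p, Or.inl rfl, b⟩
        · exact ⟨a, g, Or.inr hg, hx⟩
      · rw [disjoint_left]
        intro x hx hx'
        simp only [mem_filter] at hx hx'
        exact hx.2.2 hx'.2
    nlinarith

include huniq in
theorem cl_deg (x : α) (hx : x ∈ T) :
    ∑ p ∈ Λ.filter (R x), (mm T R p - 1) + 1 = T.card := by
  have h := cap_part (T.erase x) (Λ.filter (R x)) (fun p y => R y p) (by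
    intro y hy
    rw [mem_erase] at hy
    obtain ⟨i, hi, hu⟩ := huniq x hx y hy.2 (Ne.symm hy.1)
    refine ⟨i, by simp [hi], ?_⟩
    intro j hj
    simp only [mem_filter] at hj
    exact hu j ⟨hj.1.1, hj.1.2, hj.2⟩)
  rw [card_erase_of_mem hx] at h
  have h3 : ∑ p ∈ Λ.filter (R x), (mm T R p - 1) =
    ∑ i ∈ Λ.filter (R x), ((T.erase x).filter (fun y => R y i)).card := by
    refine sum_congr rfl fun p hp => ?_
    rw [mem_filter] at hp
    rw [filter_erase, card_erase_of_mem (by simp [hx, hp.2])]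
    rfl
  rw [h3, h]
  have : 0 < T.card := card_pos.mpr ⟨x, hx⟩
  omega

include huniq in
theorem cl_bound0 (x : α) (hx : x ∈ T) (c : ℕ) (hc : ∀ p ∈ Λ, R x p → mm T R p ≤ c) :
    ∑ p ∈ Λ.filter (R x), mm T R p * (mm T R p - 1) ≤ c * (T.card - 1) := by
  have h := cl_deg T Λ R huniq x hx
  have : T.card - 1 = ∑ p ∈ Λ.filter (R x), (mm T R p - 1) := by omega
  rw [this, mul_sum]
  refine sum_le_sum fun p hp => ?_
  rw [mem_filter] at hp
  exact Nat.mul_le_mul_right _ (hc p hp.1 hp.2)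

include huniq in
theorem cl_bound1 (x : α) (hx : x ∈ T) (c : ℕ) (p0 : β) (hp0 : p0 ∈ Λ) (hx0 : R x p0)
    (hc : ∀ p ∈ Λ, R x p → p ≠ p0 → mm T R p ≤ c) :
    mm T R p0 ≤ T.card ∧ ∑ p ∈ Λ.filter (R x), mm T R p * (mm T R p - 1) ≤
      mm T R p0 * (mm T R p0 - 1) + c * (T.card - mm T R p0) := by
  have h := cl_deg T Λ R huniq x hx
  have hmem : p0 ∈ Λ.filter (R x) := by simp [hp0, hx0]
  rw [← add_sum_erase _ _ hmem] at h
  rw [← add_sum_erase _ _ hmem]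
  have hpos : 0 < mm T R p0 := card_pos.mpr ⟨x, by simp [hx, hx0]⟩
  have : T.card - mm T R p0 = ∑ p ∈ (Λ.filter (R x)).erase p0, (mm T R p - 1) := by omega
  refine ⟨card_le_card (filter_subset _ _), ?_⟩
  rw [this, mul_sum]
  gcongr with p hp
  simp only [mem_erase, mem_filter] at hp
  exact hc p hp.2.1 hp.2.2 hp.1

include huniq in
theorem cl_main (q : ℕ) (hq : 2048 ≤ q) (hm : ∀ p ∈ Λ, mm T R p ≤ q + 1)
    (hS : ∀ x ∈ T, q ^ 2 + q ≤ ∑ p ∈ Λ.filter (R x), mm T R p * (mm T R p - 1))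
    (ht : T.card + 135 ≤ 3 * q) (ht2 : q + 1 < T.card) :
    ∃ p1 ∈ Λ, ∃ p2 ∈ Λ, p1 ≠ p2 ∧ (∀ x ∈ T, R x p1 ∨ R x p2) ∧
      q ≤ mm T R p1 ∧ q ≤ mm T R p2 := by
  set H := Λ.filter (fun p => q ≤ 6 * mm T R p) with hH
  set G := Λ.filter (fun p => 7 * q ≤ 9 * mm T R p) with hG
  have hbig : ∀ J ⊆ Λ, ∑ p ∈ J, mm T R p ≤ T.card + J.card ^ 2 := fun J hJ =>
    (cl_union T Λ R huniq J hJ).trans (by gcongr; exact filter_subset _ _)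
  have hHc : H.card ≤ 18 := by
    by_contra hcon
    obtain ⟨J, hJ, hJc⟩ := exists_subset_card_eq (show 19 ≤ H.card by omega)
    have h1 := hbig J (hJ.trans (filter_subset _ _))
    have h2 : J.card * q ≤ ∑ p ∈ J, 6 * mm T R p := by
      rw [← smul_eq_mul]
      refine card_nsmul_le_sum _ _ _ fun p hp => ?_
      exact (mem_filter.mp (hJ hp)).2
    rw [← mul_sum] at h2
    rw [hJc] at h1 h2
    omega
  have hGc : G.card ≤ 3 := by
    by_contra hcon
    obtain ⟨J, hJ, hJc⟩ := exists_subset_card_eq (show 4 ≤ G.card by omega)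
    have h1 := hbig J (hJ.trans (filter_subset _ _))
    have h2 : J.card * (7 * q) ≤ ∑ p ∈ J, 9 * mm T R p := by
      rw [← smul_eq_mul]
      refine card_nsmul_le_sum _ _ _ fun p hp => ?_
      exact (mem_filter.mp (hJ hp)).2
    rw [← mul_sum] at h2
    rw [hJc] at h1 h2
    omega
  set E := T.filter (fun x => ¬ ∃ g ∈ G, R x g) with hE
  have hEH : ∀ x ∈ E, ∃ p ∈ H, ∃ p' ∈ H, p ≠ p' ∧ R x p ∧ R x p' := by
    intro x hx
    by_contra hcon
    push Not at hcon
    rw [hE, mem_filter] at hx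
    have hSx := hS x hx.1
    by_cases hex : ∃ p0 ∈ H, R x p0
    · obtain ⟨p0, hp0, hx0⟩ := hex
      have hp0' := mem_filter.mp hp0
      have hb := cl_bound1 T Λ R huniq x hx.1 (q / 6) p0 hp0'.1 hx0 (by
        intro p hp hxp hne
        by_contra hlt
        exact hcon p0 hp0 p (by rw [hH, mem_filter]; exact ⟨hp, by omega⟩) (Ne.symm hne) hx0 hxp)
      have hng : ¬ 7 * q ≤ 9 * mm T R p0 := fun h => hx.2 ⟨p0, by
        rw [hG, mem_filter]; exact ⟨hp0'.1, h⟩, hx0⟩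
      obtain ⟨hb1, hb2⟩ := hb
      set M := mm T R p0
      set t := T.card
      have h6 : 6 * (q / 6) ≤ q := by omega
      have h7 : M * (M - 1) ≤ M * M := Nat.mul_le_mul_left _ (by omega)
      have h8 : 6 * (q / 6 * (t - M)) ≤ q * (t - M) := by
        rw [← mul_assoc]; exact Nat.mul_le_mul_right _ h6
      have h9 : q * (t - M) + q * M ≤ q * (3 * q) := by
        rw [← mul_add]; exact Nat.mul_le_mul_left _ (by omega)
      have h10 : 6 * (q^2+q) ≤ 6 * (M * M) + q * (t - M) := by omega
      have h11 : 9 * M < 7 * q := by omega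
      have hq0 : 0 < q := by omega
      nlinarith
    · push Not at hex
      have hb := cl_bound0 T Λ R huniq x hx.1 (q / 6) (by
        intro p hp hxp
        by_contra hlt
        exact hex p (by rw [hH, mem_filter]; exact ⟨hp, by omega⟩) hxp)
      have h6 : 6 * (q / 6) ≤ q := by omega
      have h8 : 6 * (q / 6 * (T.card - 1)) ≤ q * (T.card - 1) := by
        rw [← mul_assoc]; exact Nat.mul_le_mul_right _ h6
      have h9 : q * (T.card - 1) ≤ q * (3 * q) := Nat.mul_le_mul_left _ (by omega)
      nlinarith
  have hEc : E.card ≤ 324 := by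
    have hsub : E ⊆ (H ×ˢ H).biUnion (fun g =>
        if g.1 = g.2 then ∅ else T.filter (fun x => R x g.1 ∧ R x g.2)) := by
      intro x hx
      obtain ⟨p, hp, p', hp', hne, h1, h2⟩ := hEH x hx
      simp only [mem_biUnion, mem_product]
      refine ⟨(p, p'), ⟨hp, hp'⟩, ?_⟩
      rw [if_neg hne, mem_filter]
      exact ⟨(mem_filter.mp hx).1, h1, h2⟩
    refine (card_le_card hsub).trans ((card_biUnion_le_card_mul _ _ 1 ?_).trans ?_)
    · rintro ⟨p, p'⟩ hg
      rw [mem_product] at hg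
      dsimp only
      split_ifs with h
      · simp
      · exact cl_inter T Λ R huniq (mem_filter.mp hg.1).1 (mem_filter.mp hg.2).1 h
    · rw [card_product]; nlinarith
  have hthin : ∀ p ∈ Λ, p ∉ G → mm T R p ≤ E.card + G.card := by
    intro p hp hpG
    have hsub : T.filter (fun x => R x p) ⊆ E ∪
        G.biUnion (fun g => T.filter (fun x => R x p ∧ R x g)) := by
      intro x hx
      rw [mem_filter] at hx
      rw [mem_union, hE, mem_filter, mem_biUnion]
      by_cases h : ∃ g ∈ G, R x g
      · right
        obtain ⟨g, hg, hxg⟩ := h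
        exact ⟨g, hg, by rw [mem_filter]; exact ⟨hx.1, hx.2, hxg⟩⟩
      · left; exact ⟨hx.1, h⟩
    refine (card_le_card hsub).trans ((card_union_le _ _).trans ?_)
    gcongr
    refine (card_biUnion_le_card_mul _ _ 1 ?_).trans (by simp)
    intro g hg
    exact cl_inter T Λ R huniq hp (mem_filter.mp hg).1 (fun h => hpG (h ▸ hg))
  have hE0 : E = ∅ := by
    by_contra hne
    obtain ⟨x, hx⟩ := nonempty_iff_ne_empty.mpr hne
    have hx' := mem_filter.mp hx
    have hb := cl_bound0 T Λ R huniq x hx'.1 327 (by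
      intro p hp hxp
      have := hthin p hp (fun hg => hx'.2 ⟨p, hg, hxp⟩)
      omega)
    have := hS x hx'.1
    have h9 : 327 * (T.card - 1) ≤ 327 * (3 * q) := Nat.mul_le_mul_left _ (by omega)
    nlinarith
  have hcov : ∀ x ∈ T, ∃ g ∈ G, R x g := by
    intro x hx
    by_contra h
    have : x ∈ E := by rw [hE, mem_filter]; exact ⟨hx, h⟩
    rw [hE0] at this
    exact absurd this (notMem_empty _)
  rw [hE0, card_empty] at hthin
  have hgen : ∀ g ∈ G, mm T R g ≤ T.card ∧
      q ^ 2 + q ≤ mm T R g * (mm T R g - 1) + G.card * (T.card - mm T R g) := by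
    intro g hg
    have hg' := mem_filter.mp hg
    have : ∃ x ∈ T, R x g ∧ ∀ g' ∈ G, g' ≠ g → ¬ R x g' := by
      by_contra hcon
      push Not at hcon
      have hsub : T.filter (fun x => R x g) ⊆
          G.biUnion (fun g' => if g = g' then ∅ else T.filter (fun x => R x g ∧ R x g')) := by
        intro x hx
        rw [mem_filter] at hx
        obtain ⟨g', h1, h2, h3⟩ := hcon x hx.1 hx.2
        rw [mem_biUnion]
        refine ⟨g', h1, ?_⟩
        rw [if_neg (Ne.symm h2), mem_filter]
        exact ⟨hx.1, hx.2, h3⟩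
      have hle : mm T R g ≤ G.card := by
        refine (card_le_card hsub).trans ((card_biUnion_le_card_mul _ _ 1 ?_).trans (by simp))
        intro g' h1
        split_ifs with h
        · simp
        · exact cl_inter T Λ R huniq hg'.1 (mem_filter.mp h1).1 h
      omega
    obtain ⟨x, hx, hxg, hxo⟩ := this
    have hb := cl_bound1 T Λ R huniq x hx G.card g hg'.1 hxg (by
      intro p hp hxp hne
      have := hthin p hp (fun h => hxo p h hne hxp)
      omega)
    exact ⟨hb.1, (hS x hx).trans hb.2⟩
  have hT0 : ∃ x, x ∈ T := card_pos.mp (by omega)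
  have hc : G.card = 0 ∨ G.card = 1 ∨ G.card = 2 ∨ G.card = 3 := by omega
  rcases hc with hc | hc | hc | hc
  · rw [card_eq_zero] at hc
    obtain ⟨x, hx⟩ := hT0
    obtain ⟨g, hg, _⟩ := hcov x hx
    rw [hc] at hg
    exact absurd hg (notMem_empty _)
  · obtain ⟨g, hg⟩ := card_eq_one.mp hc
    have h1 : T.card ≤ mm T R g := by
      refine card_le_card ?_
      intro x hx
      obtain ⟨g', hg', hx'⟩ := hcov x hx
      rw [hg, mem_singleton] at hg'
      rw [mem_filter]
      exact ⟨hx, hg' ▸ hx'⟩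
    have h2 := hm g (mem_filter.mp (show g ∈ G by simp [hg])).1
    omega
  · obtain ⟨g, g', hne, hgg⟩ := card_eq_two.mp hc
    have hg : g ∈ G := by simp [hgg]
    have hg' : g' ∈ G := by simp [hgg]
    have hcov' : ∀ x ∈ T, R x g ∨ R x g' := by
      intro x hx
      obtain ⟨p, hp, hx'⟩ := hcov x hx
      rw [hgg, mem_insert, mem_singleton] at hp
      rcases hp with rfl | rfl
      · exact Or.inl hx'
      · exact Or.inr hx'
    have hcard : T.card ≤ mm T R g + mm T R g' := by
      refine le_trans (card_le_card ?_) (card_union_le _ _)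
      intro x hx
      rw [mem_union, mem_filter, mem_filter]
      exact (hcov' x hx).imp (fun h => ⟨hx, h⟩) (fun h => ⟨hx, h⟩)
    have key : ∀ M M' t : ℕ, t ≤ M + M' → M' ≤ q + 1 → M ≤ t →
        q^2+q ≤ M * (M - 1) + 2 * (t - M) → q ≤ M := by
      intro M M' t h1 h2 h3 h4
      by_contra hlt
      have h5 : M * (M - 1) ≤ (q - 1) * (q - 2) := Nat.mul_le_mul (by omega) (by omega)
      obtain ⟨z, rfl⟩ : ∃ z, q = z + 2 := ⟨q - 2, by omega⟩
      have h6 : (z + 2 - 1) * (z + 2 - 2) = (z+1) * z := by congr 1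
      rw [h6] at h5
      have h7 : 2 * (t - M) ≤ 2 * (z + 3) := by omega
      nlinarith
    have hmg := hm g (mem_filter.mp hg).1
    have hmg' := hm g' (mem_filter.mp hg').1
    have e1 := hgen g hg
    have e2 := hgen g' hg'
    rw [hc] at e1 e2
    exact ⟨g, (mem_filter.mp hg).1, g', (mem_filter.mp hg').1, hne, hcov',
      key _ _ _ hcard hmg' e1.1 e1.2, key _ _ _ (by omega) hmg e2.1 e2.2⟩
  · exfalso
    have hlow : ∀ g ∈ G, q ≤ mm T R g + 6 := by
      intro g hg
      obtain ⟨e1, e2⟩ := hgen g hg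
      rw [hc] at e2
      have hg' := (mem_filter.mp hg).2
      by_contra hlt
      set M := mm T R g
      have h5 : M * (M - 1) ≤ (q - 7) * (q - 8) := Nat.mul_le_mul (by omega) (by omega)
      obtain ⟨z, rfl⟩ : ∃ z, q = z + 8 := ⟨q - 8, by omega⟩
      have h6 : (z + 8 - 7) * (z + 8 - 8) = (z+1) * z := by congr 1
      rw [h6] at h5
      have h7 : 3 * (T.card - M) ≤ 3 * (3 * (z + 8)) := by omega
      nlinarith
    have h1 := hbig G (filter_subset _ _)
    have h2 : G.card * q ≤ ∑ p ∈ G, (mm T R p + 6) := by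
      rw [← smul_eq_mul]
      exact card_nsmul_le_sum _ _ _ hlow
    rw [sum_add_distrib, sum_const, hc] at h2
    rw [hc] at h1
    simp only [smul_eq_mul] at h2
    omega
theorem cl_double (f : β → ℤ) : ∑ p ∈ Λ, (mm T R p : ℤ) * f p =
    ∑ x ∈ T, ∑ p ∈ Λ.filter (R x), f p := by
  have h1 : ∀ p ∈ Λ, (mm T R p : ℤ) * f p = ∑ x ∈ T, if R x p then f p else 0 := by
    intro p _
    rw [← sum_filter, sum_const, nsmul_eq_mul]
    rfl
  rw [sum_congr rfl h1, sum_comm]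
  refine sum_congr rfl fun x _ => ?_
  rw [sum_filter]

include huniq in
theorem cl_counts (q : ℕ) (hD : ∀ x ∈ T, (Λ.filter (R x)).card = q + 1)
    (p1 p2 : β) (hp1 : p1 ∈ Λ) (hp2 : p2 ∈ Λ) (hne : p1 ≠ p2)
    (hcov : ∀ x ∈ T, R x p1 ∨ R x p2) (h1 : 3 ≤ mm T R p1) (h2 : 3 ≤ mm T R p2) :
    ((Λ.filter (fun p => mm T R p = 1)).card : ℤ) = T.card * (q + 1) - T.card * (T.card - 1)
      - (mm T R p1 - mm T R p1 * (mm T R p1 - 1)) - (mm T R p2 - mm T R p2 * (mm T R p2 - 1)) ∧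
    2 * ((Λ.filter (fun p => mm T R p = 0)).card : ℤ) = 2 * Λ.card - 2 * (T.card * (q + 1))
      + T.card * (T.card - 1)
      - (2 - 2 * mm T R p1 + mm T R p1 * (mm T R p1 - 1))
      - (2 - 2 * mm T R p2 + mm T R p2 * (mm T R p2 - 1)) := by
  have hle : ∀ p ∈ Λ, p ≠ p1 → p ≠ p2 → mm T R p ≤ 2 := by
    intro p hp hn1 hn2
    have hsub : T.filter (fun x => R x p) ⊆
        T.filter (fun x => R x p ∧ R x p1) ∪ T.filter (fun x => R x p ∧ R x p2) := by
      intro x hx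
      rw [mem_filter] at hx
      rw [mem_union, mem_filter, mem_filter]
      exact (hcov x hx.1).imp (fun h => ⟨hx.1, hx.2, h⟩) (fun h => ⟨hx.1, hx.2, h⟩)
    have a1 := cl_inter T Λ R huniq hp hp1 hn1
    have a2 := cl_inter T Λ R huniq hp hp2 hn2
    have a3 := (card_le_card hsub).trans (card_union_le _ _)
    unfold mm
    omega
  have e1 : ∑ p ∈ Λ, (mm T R p : ℤ) = T.card * (q + 1) := by
    have := cl_double T Λ R (fun _ => 1)
    simp only [mul_one, sum_const, nsmul_eq_mul] at this
    rw [this, sum_congr rfl (g := fun _ => (q + 1 : ℤ)), sum_const, nsmul_eq_mul]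
    intro x hx
    rw [hD x hx]; push_cast; ring
  have e2 : ∑ p ∈ Λ, (mm T R p : ℤ) * (mm T R p - 1) = T.card * (T.card - 1) := by
    rw [cl_double T Λ R (fun p => (mm T R p : ℤ) - 1), sum_congr rfl (g := fun _ => (T.card - 1 : ℤ)),
      sum_const, nsmul_eq_mul]
    intro x hx
    have := cl_deg T Λ R huniq x hx
    rw [← this]
    push_cast
    rw [add_sub_cancel_right]
    refine sum_congr rfl fun p hp => ?_
    have : 0 < mm T R p := card_pos.mpr ⟨x, by simp [hx, (mem_filter.mp hp).2]⟩
    omega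
  have hsplit : ∀ f : β → ℤ, ∑ p ∈ Λ, f p = f p1 + (f p2 + ∑ p ∈ (Λ.erase p1).erase p2, f p) := by
    intro f
    rw [add_sum_erase _ _ (mem_erase.mpr ⟨Ne.symm hne, hp2⟩), add_sum_erase _ _ hp1]
  have hval : ∀ p ∈ (Λ.erase p1).erase p2, mm T R p = 0 ∨ mm T R p = 1 ∨ mm T R p = 2 := by
    intro p hp
    simp only [mem_erase] at hp
    have := hle p hp.2.2 hp.2.1 hp.1
    omega
  constructor
  · rw [card_filter]
    push_cast
    rw [← e1, ← e2, hsplit, hsplit (fun p => (mm T R p : ℤ)), hsplit (fun p => (mm T R p : ℤ) * _)]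
    rw [if_neg (by omega), if_neg (by omega)]
    have : ∑ p ∈ (Λ.erase p1).erase p2, (if mm T R p = 1 then (1 : ℤ) else 0) =
      ∑ p ∈ (Λ.erase p1).erase p2, (mm T R p : ℤ) -
        ∑ p ∈ (Λ.erase p1).erase p2, (mm T R p : ℤ) * (mm T R p - 1) := by
      rw [← sum_sub_distrib]
      refine sum_congr rfl fun p hp => ?_
      rcases hval p hp with h | h | h <;> simp [h]
    rw [this]
    ring
  · have e3 : (Λ.card : ℤ) = ∑ p ∈ Λ, (1 : ℤ) := by simp
    rw [card_filter]
    push_cast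
    rw [← e1, ← e2, e3, hsplit, hsplit (fun p => (mm T R p : ℤ)), hsplit (fun p => (mm T R p : ℤ) * _),
      hsplit (fun p => (1 : ℤ))]
    rw [if_neg (by omega), if_neg (by omega)]
    have : 2 * ∑ p ∈ (Λ.erase p1).erase p2, (if mm T R p = 0 then (1 : ℤ) else 0) =
      2 * ∑ p ∈ (Λ.erase p1).erase p2, (1 : ℤ) - 2 * ∑ p ∈ (Λ.erase p1).erase p2, (mm T R p : ℤ) +
        ∑ p ∈ (Λ.erase p1).erase p2, (mm T R p : ℤ) * (mm T R p - 1) := by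
      simp only [mul_sum]
      rw [← sum_sub_distrib, ← sum_add_distrib]
      refine sum_congr rfl fun p hp => ?_
      rcases hval p hp with h | h | h <;> simp [h]
    linear_combination this
end CL

section PG3
open Classical

structure PG3 {X : Type*} [Fintype X] (q : ℕ) (L P : Finset (Finset X)) : Prop where
  line_card : ∀ l ∈ L, l.card = q + 1
  join : ∀ x y, x ≠ y → ∃ l ∈ L, x ∈ l ∧ y ∈ l
  line_uniq : ∀ l ∈ L, ∀ l' ∈ L, ∀ x y, x ≠ y → x ∈ l → y ∈ l → x ∈ l' → y ∈ l' → l = l'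
  plane_closed : ∀ p ∈ P, ∀ l ∈ L, ∀ x y, x ≠ y → x ∈ l → y ∈ l → x ∈ p → y ∈ p → l ⊆ p
  span : ∀ l ∈ L, ∀ x, x ∉ l → ∃ p ∈ P, l ⊆ p ∧ x ∈ p
  span_uniq : ∀ l ∈ L, ∀ x, x ∉ l → ∀ p ∈ P, ∀ p' ∈ P, l ⊆ p → x ∈ p → l ⊆ p' → x ∈ p' → p = p'
  meet_lines : ∀ p ∈ P, ∀ l ∈ L, ∀ l' ∈ L, l ⊆ p → l' ⊆ p → ∃ x ∈ l, x ∈ l'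
  meet_planes : ∀ p ∈ P, ∀ p' ∈ P, p ≠ p' → p ∩ p' ∈ L
  plane_card : ∀ p ∈ P, p.card = q ^ 2 + q + 1
  card_univ : Fintype.card X = q ^ 3 + q ^ 2 + q + 1
  q_pos : 2 ≤ q

variable {X : Type*} [Fintype X] {q : ℕ} {L P : Finset (Finset X)} (G : PG3 q L P)

/-- closed set of points -/
def Closed (L : Finset (Finset X)) (Y : Finset X) : Prop :=
  ∀ l ∈ L, ∀ x y, x ≠ y → x ∈ l → y ∈ l → x ∈ Y → y ∈ Y → l ⊆ Y

include G in
theorem pg_lines_in (Y : Finset X) (hY : Closed L Y) (x : X) (hx : x ∈ Y) :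
    q * (L.filter (fun l => x ∈ l ∧ l ⊆ Y)).card + 1 = Y.card := by
  have h := cap_part (Y.erase x) (L.filter (fun l => x ∈ l ∧ l ⊆ Y)) (fun l y => y ∈ l) (by
    intro y hy
    rw [mem_erase] at hy
    obtain ⟨l, hl, h1, h2⟩ := G.join x y (Ne.symm hy.1)
    refine ⟨l, ⟨mem_filter.mpr ⟨hl, h1, hY l hl x y (Ne.symm hy.1) h1 h2 hx hy.2⟩, h2⟩, ?_⟩
    rintro l' ⟨hl', hy'⟩
    rw [mem_filter] at hl'
    exact G.line_uniq l' hl'.1 l hl x y (Ne.symm hy.1) hl'.2.1 hy' h1 h2)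
  rw [card_erase_of_mem hx] at h
  rw [sum_congr rfl (g := fun _ => q), sum_const, smul_eq_mul] at h
  · have : 0 < Y.card := card_pos.mpr ⟨x, hx⟩
    rw [mul_comm]; omega
  · intro l hl
    rw [mem_filter] at hl
    have : (Y.erase x).filter (fun y => y ∈ l) = l.erase x := by
      ext y
      simp only [mem_filter, mem_erase]
      exact ⟨fun h => ⟨h.1.1, h.2⟩, fun h => ⟨⟨h.1, hl.2.2 h.2⟩, h.2⟩⟩
    rw [this, card_erase_of_mem hl.2.1, G.line_card l hl.1]
    rfl

include G in
theorem pg_closed_plane {p : Finset X} (hp : p ∈ P) : Closed L p := fun l hl => G.plane_closed p hp l hl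

theorem pg_closed_univ : Closed L (univ : Finset X) := fun _ _ _ _ _ _ _ _ _ => subset_univ _

include G in
theorem pg_lines_plane {p : Finset X} (hp : p ∈ P) (x : X) (hx : x ∈ p) :
    (L.filter (fun l => x ∈ l ∧ l ⊆ p)).card = q + 1 := by
  have h := pg_lines_in G p (pg_closed_plane G hp) x hx
  rw [G.plane_card p hp] at h
  have := G.q_pos
  apply Nat.eq_of_mul_eq_mul_left (show 0 < q by omega)
  nlinarith

include G in
theorem pg_lines_univ (x : X) :
    (L.filter (fun l => x ∈ l)).card = q ^ 2 + q + 1 := by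
  have h := pg_lines_in G univ pg_closed_univ x (mem_univ _)
  rw [card_univ, G.card_univ] at h
  simp only [subset_univ, and_true] at h
  have := G.q_pos
  apply Nat.eq_of_mul_eq_mul_left (show 0 < q by omega)
  nlinarith

include G in
theorem pg_span_unique {l : Finset X} (hl : l ∈ L) {x : X} (hx : x ∉ l) :
    ∃! p, p ∈ P.filter (fun p => l ⊆ p) ∧ x ∈ p := by
  obtain ⟨p, hp, h1, h2⟩ := G.span l hl x hx
  refine ⟨p, ⟨mem_filter.mpr ⟨hp, h1⟩, h2⟩, ?_⟩
  rintro p' ⟨hp', h3⟩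
  rw [mem_filter] at hp'
  exact G.span_uniq l hl x hx p' hp'.1 p hp hp'.2 h3 h1 h2

include G in
theorem pg_planes_line {l : Finset X} (hl : l ∈ L) :
    (P.filter (fun p => l ⊆ p)).card = q + 1 := by
  have h := cap_part (univ \ l) (P.filter (fun p => l ⊆ p)) (fun p x => x ∈ p) (by
    intro x hx
    exact pg_span_unique G hl (mem_sdiff.mp hx).2)
  rw [sum_congr rfl (g := fun _ => q ^ 2), sum_const, smul_eq_mul,
    card_sdiff_of_subset (subset_univ _), card_univ, G.card_univ, G.line_card l hl] at h
  · have := G.q_pos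
    apply Nat.eq_of_mul_eq_mul_left (show 0 < q ^ 2 by positivity)
    have h2 : q ^ 3 + q ^ 2 + q + 1 - (q + 1) = q ^ 3 + q ^ 2 := by omega
    rw [h2] at h
    nlinarith
  · intro p hp
    rw [mem_filter] at hp
    have : (univ \ l).filter (fun y => y ∈ p) = p \ l := by
      ext y
      simp [and_comm]
    rw [this, card_sdiff_of_subset hp.2, G.plane_card p hp.1, G.line_card l hl]
    omega

include G in
theorem pg_planes_point (x : X) :
    (P.filter (fun p => x ∈ p)).card = q ^ 2 + q + 1 := by
  have h := Finset.sum_card_bipartiteAbove_eq_sum_card_bipartiteBelow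
    (s := L.filter (fun l => x ∈ l)) (t := P.filter (fun p => x ∈ p)) (fun l p => l ⊆ p)
  simp only [Finset.bipartiteAbove, Finset.bipartiteBelow] at h
  rw [sum_congr rfl (g := fun _ => q + 1), sum_const, pg_lines_univ G x] at h
  · rw [sum_congr rfl (g := fun _ => q + 1), sum_const] at h
    · simp only [smul_eq_mul] at h
      exact (Nat.eq_of_mul_eq_mul_right (Nat.succ_pos q) h).symm
    · intro p hp
      rw [mem_filter] at hp
      rw [filter_filter]
      exact pg_lines_plane G hp.1 x hp.2
  · intro l hl
    rw [mem_filter] at hl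
    rw [filter_filter, ← pg_planes_line G hl.1]
    congr 1
    ext p
    simp only [mem_filter]
    exact ⟨fun h => ⟨h.1, h.2.2⟩, fun h => ⟨h.1, h.2 hl.2, h.2⟩⟩

variable (K : Finset X)

/-- tangent lines -/
noncomputable def Tan (L : Finset (Finset X)) (K : Finset X) : Finset (Finset X) :=
  L.filter (fun l => (l ∩ K).card = 1)

variable (hcap : ∀ l ∈ L, (l ∩ K).card ≤ 2)

include G hcap in
theorem pg_tan_in (Y : Finset X) (hY : Closed L Y) (x : X) (hx : x ∈ Y) (hxK : x ∈ K) :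
    ((Tan L K).filter (fun l => x ∈ l ∧ l ⊆ Y)).card + (Y ∩ K).card =
      (L.filter (fun l => x ∈ l ∧ l ⊆ Y)).card + 1 := by
  set I := (L.filter (fun l => x ∈ l ∧ l ⊆ Y)).filter (fun l => ¬ (l ∩ K).card = 1) with hI
  have h := cap_part ((Y ∩ K).erase x) I (fun l y => y ∈ l) (by
    intro y hy
    rw [mem_erase, mem_inter] at hy
    obtain ⟨l, hl, h1, h2⟩ := G.join x y (Ne.symm hy.1)
    refine ⟨l, ⟨?_, h2⟩, ?_⟩
    · rw [hI, mem_filter, mem_filter]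
      refine ⟨⟨hl, h1, hY l hl x y (Ne.symm hy.1) h1 h2 hx hy.2.1⟩, ?_⟩
      intro hc
      have := card_le_one.mp hc.le x (mem_inter.mpr ⟨h1, hxK⟩) y (mem_inter.mpr ⟨h2, hy.2.2⟩)
      exact hy.1 this.symm
    · rintro l' ⟨hl', hy'⟩
      rw [hI, mem_filter, mem_filter] at hl'
      exact G.line_uniq l' hl'.1.1 l hl x y (Ne.symm hy.1) hl'.1.2.1 hy' h1 h2)
  have hxm : x ∈ Y ∩ K := mem_inter.mpr ⟨hx, hxK⟩
  rw [card_erase_of_mem hxm] at h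
  rw [sum_congr rfl (g := fun _ => 1), sum_const, smul_eq_mul, mul_one] at h
  · have h2 : ((L.filter (fun l => x ∈ l ∧ l ⊆ Y)).filter (fun l => (l ∩ K).card = 1)).card +
        I.card = (L.filter (fun l => x ∈ l ∧ l ⊆ Y)).card := by
      rw [hI]
      convert card_filter_add_card_filter_not (s := L.filter (fun l => x ∈ l ∧ l ⊆ Y))
        (fun l => (l ∩ K).card = 1)
    have h3 : (Tan L K).filter (fun l => x ∈ l ∧ l ⊆ Y) =
      (L.filter (fun l => x ∈ l ∧ l ⊆ Y)).filter (fun l => (l ∩ K).card = 1) := by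
      unfold Tan
      rw [filter_filter, filter_filter]
      congr 1
      ext l
      tauto
    rw [h3]
    have : 0 < (Y ∩ K).card := card_pos.mpr ⟨x, hxm⟩
    omega
  · intro l hl
    rw [hI, mem_filter, mem_filter] at hl
    have h5 : ((Y ∩ K).erase x).filter (fun y => y ∈ l) = (l ∩ K).erase x := by
      ext y
      simp only [mem_filter, mem_erase, mem_inter]
      exact ⟨fun h => ⟨h.1.1, h.2, h.1.2.2⟩, fun h => ⟨⟨h.1, hl.1.2.2 h.2.1, h.2.2⟩, h.2.1⟩⟩
    have hxl : x ∈ l ∩ K := mem_inter.mpr ⟨hl.1.2.1, hxK⟩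
    rw [h5, card_erase_of_mem hxl]
    have h6 := hcap l hl.1.1
    have : 0 < (l ∩ K).card := card_pos.mpr ⟨x, hxl⟩
    omega

include G hcap in
theorem pg_tan_plane {p : Finset X} (hp : p ∈ P) (x : X) (hx : x ∈ p) (hxK : x ∈ K) :
    ((Tan L K).filter (fun l => x ∈ l ∧ l ⊆ p)).card + (p ∩ K).card = q + 2 := by
  rw [pg_tan_in G K hcap p (pg_closed_plane G hp) x hx hxK, pg_lines_plane G hp x hx]

include G hcap in
theorem pg_tan_univ (x : X) (hxK : x ∈ K) :
    ((Tan L K).filter (fun l => x ∈ l)).card + K.card = q ^ 2 + q + 2 := by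
  have := pg_tan_in G K hcap univ pg_closed_univ x (mem_univ _) hxK
  simp only [subset_univ, and_true, univ_inter] at this
  rw [this, pg_lines_univ G]

include G in
/-- sum over planes through a line -/
theorem pg_sum_planes {l : Finset X} (hl : l ∈ L) :
    ∑ p ∈ P.filter (fun p => l ⊆ p), (((p ∩ K).card : ℤ) - (l ∩ K).card) =
      K.card - (l ∩ K).card := by
  have h := cap_part (K \ l) (P.filter (fun p => l ⊆ p)) (fun p x => x ∈ p) (by
    intro x hx
    exact pg_span_unique G hl (mem_sdiff.mp hx).2)
  have h1 : ((K \ l).card : ℤ) = K.card - (l ∩ K).card := by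
    have := card_sdiff_add_card_inter K l
    rw [inter_comm] at this
    omega
  rw [← h1, ← h]
  push_cast
  refine sum_congr rfl fun p hp => ?_
  rw [mem_filter] at hp
  have h2 : (K \ l).filter (fun x => x ∈ p) = (p ∩ K) \ (l ∩ K) := by
    ext y
    simp only [mem_filter, mem_sdiff, mem_inter]
    tauto
  rw [h2, card_sdiff_of_subset (inter_subset_inter_right hp.2)]
  rw [Nat.cast_sub (card_le_card (inter_subset_inter_right hp.2))]

include G in
theorem pg_sum_r {l : Finset X} (hl : l ∈ L) :
    ∑ p ∈ P.filter (fun p => l ⊆ p), ((q : ℤ) + 2 - (p ∩ K).card) =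
      (q + 1) * (q + 2 - (l ∩ K).card) - (K.card - (l ∩ K).card) := by
  rw [← pg_sum_planes G K hl]
  have h : ((P.filter (fun p => l ⊆ p)).card : ℤ) = q + 1 := by
    rw [pg_planes_line G hl]; push_cast; ring
  rw [← h, ← nsmul_eq_mul, ← sum_const, ← sum_sub_distrib]
  refine sum_congr rfl fun p _ => ?_
  ring

variable (hcomp : ∀ x, x ∉ K → ∃ l ∈ L, x ∈ l ∧ (l ∩ K).card = 2)
  (harc : ∀ p ∈ P, ∀ x ∈ p, x ∉ K → (∃ l ∈ L, l ⊆ p ∧ x ∈ l ∧ (l ∩ K).card = 2) →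
    ((Tan L K).filter (fun l => x ∈ l ∧ l ⊆ p)).card + (p ∩ K).card ≤ q + 2)

include G in
/-- two distinct concurrent lines lie in a unique common plane -/
theorem pg_lines_plane_unique {l l' : Finset X} (hl : l ∈ L) (hl' : l' ∈ L) (hne : l ≠ l') {x : X}
    (hx : x ∈ l) (hx' : x ∈ l') : ∃! p, p ∈ P.filter (fun p => l ⊆ p) ∧ l' ⊆ p := by
  have : ∃ y ∈ l', y ≠ x := by
    have h1 : 1 < l'.card := by rw [G.line_card l' hl']; have := G.q_pos; omega
    obtain ⟨y, hy, hyx⟩ := exists_mem_ne h1 x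
    exact ⟨y, hy, hyx⟩
  obtain ⟨y, hy, hyx⟩ := this
  have hyl : y ∉ l := fun h => hne (G.line_uniq l hl l' hl' y x hyx h hx hy hx')
  obtain ⟨p, ⟨hp, hyp⟩, hu⟩ := pg_span_unique G hl hyl
  have hp' := mem_filter.mp hp
  refine ⟨p, ⟨hp, G.plane_closed p hp'.1 l' hl' x y (Ne.symm hyx) hx' hy (hp'.2 hx) hyp⟩, ?_⟩
  rintro p2 ⟨hp2, h2⟩
  exact hu p2 ⟨hp2, h2 hy⟩

include G hcap hcomp harc in
theorem pg_sigma (x : X) (hx : x ∉ K) :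
    ((((Tan L K).filter (fun l => x ∈ l)).card : ℤ)) ≤ q ^ 2 + q + 2 - K.card := by
  obtain ⟨l, hl, hxl, hl2⟩ := hcomp x hx
  have h := cap_part ((Tan L K).filter (fun l => x ∈ l)) (P.filter (fun p => l ⊆ p))
    (fun p l' => l' ⊆ p) (by
      intro l' hl'
      unfold Tan at hl'
      rw [mem_filter, mem_filter] at hl'
      refine pg_lines_plane_unique G hl hl'.1.1 ?_ hxl hl'.2
      rintro rfl
      omega)
  have h2 := pg_sum_r G K hl
  rw [hl2] at h2
  rw [← h]
  push_cast
  have h3 : ((q : ℤ) ^ 2 + q + 2 - K.card) = (q + 1) * (q + 2 - (2 : ℕ)) - (K.card - (2 : ℕ)) := by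
    push_cast; ring
  rw [h3, ← h2]
  refine sum_le_sum fun p hp => ?_
  rw [mem_filter] at hp
  rw [filter_filter]
  have := harc p hp.1 x (hp.2 hxl) hx ⟨l, hl, hp.2, hxl, hl2⟩
  omega

include G hcap hcomp harc in
theorem pg_count (x : X) (hx : x ∈ K) (l : Finset X) (hl : l ∈ Tan L K) (hxl : x ∈ l) :
    ∑ p ∈ P.filter (fun p => l ⊆ p), (((p ∩ K).card : ℤ) - 1) * (q + 2 - (p ∩ K).card) ≤
      q * (q ^ 2 + q + 1 - K.card) := by
  have hl' : l ∈ L ∧ (l ∩ K).card = 1 := mem_filter.mp hl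
  have hlK : ∀ y ∈ l, y ∈ K → y = x := fun y hy hyK =>
    card_le_one.mp hl'.2.le y (mem_inter.mpr ⟨hy, hyK⟩) x (mem_inter.mpr ⟨hxl, hx⟩)
  set S := (Tan L K).filter (fun m => x ∉ m ∧ ∃ y ∈ l, y ∈ m) with hS
  have hSL : ∀ m ∈ S, m ∈ L := fun m hm => (mem_filter.mp (mem_filter.mp hm).1).1
  have hSne : ∀ m ∈ S, l ≠ m := by
    rintro m hm rfl
    exact (mem_filter.mp hm).2.1 hxl
  -- count over points of l
  have hA := cap_part S (l.erase x) (fun y m => y ∈ m) (by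
    intro m hm
    obtain ⟨hm1, hm2, y, hy, hym⟩ := mem_filter.mp hm
    refine ⟨y, ⟨mem_erase.mpr ⟨fun h => hm2 (h ▸ hym), hy⟩, hym⟩, ?_⟩
    rintro z ⟨hz, hzm⟩
    by_contra hzy
    exact hSne m hm (G.line_uniq l hl'.1 m (hSL m hm) z y hzy (mem_erase.mp hz).2 hy hzm hym))
  have hA2 : (S.card : ℤ) ≤ q * (q ^ 2 + q + 1 - K.card) := by
    rw [← hA]
    push_cast
    have hc : ((l.erase x).card : ℤ) = q := by
      rw [card_erase_of_mem hxl, G.line_card l hl'.1]; simp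
    rw [← hc, ← nsmul_eq_mul]
    refine sum_le_card_nsmul _ _ _ fun y hy => ?_
    rw [mem_erase] at hy
    rw [hc]
    have hyK : y ∉ K := fun h => hy.1 (hlK y hy.2 h)
    have hs := pg_sigma G K hcap hcomp harc y hyK
    have hlt : (S.filter (fun m => y ∈ m)).card < ((Tan L K).filter (fun m => y ∈ m)).card := by
      apply card_lt_card
      rw [ssubset_iff_of_subset]
      · refine ⟨l, mem_filter.mpr ⟨hl, hy.2⟩, ?_⟩
        intro h
        exact hSne l (mem_filter.mp h).1 rfl
      · intro m hm
        rw [mem_filter] at hm ⊢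
        exact ⟨(mem_filter.mp hm.1).1, hm.2⟩
    have : ((S.filter (fun m => y ∈ m)).card : ℤ) < ((Tan L K).filter (fun m => y ∈ m)).card := by
      exact_mod_cast hlt
    linarith
  refine le_trans (le_of_eq ?_) hA2
  -- count over planes through l
  have hB := cap_part S (P.filter (fun p => l ⊆ p)) (fun p m => m ⊆ p) (by
    intro m hm
    obtain ⟨hm1, hm2, y, hy, hym⟩ := mem_filter.mp hm
    exact pg_lines_plane_unique G hl'.1 (hSL m hm) (hSne m hm) hy hym)
  rw [← hB]
  push_cast
  refine sum_congr rfl fun p hp => ?_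
  rw [mem_filter] at hp
  have hC := cap_part (S.filter (fun m => m ⊆ p)) ((p ∩ K).erase x) (fun y m => y ∈ m) (by
    intro m hm
    obtain ⟨hm1, hmp⟩ := mem_filter.mp hm
    obtain ⟨hm2, hm3, -⟩ := mem_filter.mp hm1
    obtain ⟨hm4, hm5⟩ := mem_filter.mp hm2
    obtain ⟨y, hy⟩ := card_eq_one.mp hm5
    have hy' : y ∈ m ∩ K := by rw [hy]; exact mem_singleton_self _
    rw [mem_inter] at hy'
    refine ⟨y, ⟨mem_erase.mpr ⟨fun h => hm3 (h ▸ hy'.1), mem_inter.mpr ⟨hmp hy'.1, hy'.2⟩⟩, hy'.1⟩, ?_⟩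
    rintro z ⟨hz, hzm⟩
    have : z ∈ m ∩ K := mem_inter.mpr ⟨hzm, (mem_inter.mp (mem_erase.mp hz).2).2⟩
    rw [hy] at this
    exact mem_singleton.mp this)
  rw [← hC]
  have hxpK : x ∈ p ∩ K := mem_inter.mpr ⟨hp.2 hxl, hx⟩
  have hcc : (((p ∩ K).erase x).card : ℤ) = (p ∩ K).card - 1 := by
    rw [card_erase_of_mem hxpK, Nat.cast_sub (card_pos.mpr ⟨x, hxpK⟩)]; simp
  rw [← hcc, ← nsmul_eq_mul, ← sum_const]
  push_cast
  refine sum_congr rfl fun y hy => ?_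
  rw [mem_erase, mem_inter] at hy
  have ht := pg_tan_plane G K hcap hp.1 y hy.2.1 hy.2.2
  have heq : (S.filter (fun m => m ⊆ p)).filter (fun m => y ∈ m) =
      (Tan L K).filter (fun m => y ∈ m ∧ m ⊆ p) := by
    ext m
    simp only [hS, mem_filter]
    constructor
    · rintro ⟨⟨⟨h1, h2, h3⟩, h4⟩, h5⟩
      exact ⟨h1, h5, h4⟩
    · rintro ⟨h1, h5, h4⟩
      have hm := mem_filter.mp h1
      refine ⟨⟨⟨h1, ?_, ?_⟩, h4⟩, h5⟩
      · intro hxm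
        exact hy.1 (card_le_one.mp hm.2.le y (mem_inter.mpr ⟨h5, hy.2.2⟩) x
          (mem_inter.mpr ⟨hxm, hx⟩))
      · exact G.meet_lines p hp.1 l hl'.1 m hm.1 hp.2 h4
  rw [heq]
  omega

include G hcap hcomp harc in
theorem pg_local (hq : 2048 ≤ q) (t : ℕ) (ht : t + K.card = q ^ 2 + q + 2)
    (ht1 : q + 1 < t) (ht2 : t + 135 ≤ 3 * q) (x : X) (hx : x ∈ K) :
    (t = 2 * q + 1 ∧ (P.filter (fun p => x ∈ p ∧ (p ∩ K).card = q + 1)).card + 1 = q) ∨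
    (t + 1 = 2 * q ∧ (P.filter (fun p => x ∈ p ∧ (p ∩ K).card = q + 2)).card = 1) ∨
    (t = 2 * q ∧ (P.filter (fun p => x ∈ p ∧ (p ∩ K).card = q + 1)).card + 1 = 2 * q ∧
      (P.filter (fun p => x ∈ p ∧ (p ∩ K).card = q + 2)).card = 0) ∨
    (t = 2 * q ∧ (P.filter (fun p => x ∈ p ∧ (p ∩ K).card = q + 1)).card = 0 ∧
      (P.filter (fun p => x ∈ p ∧ (p ∩ K).card = q + 2)).card + 1 = q) := by
  set T := (Tan L K).filter (fun l => x ∈ l) with hT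
  set Λ := P.filter (fun p => x ∈ p) with hΛ
  have hTc : T.card = t := by
    have h' : T.card + K.card = q ^ 2 + q + 2 := by
      rw [hT]
      convert pg_tan_univ G K hcap x hx
    omega
  have hTm : ∀ l ∈ T, l ∈ Tan L K ∧ l ∈ L ∧ x ∈ l := fun l hl =>
    ⟨(mem_filter.mp hl).1, (mem_filter.mp (mem_filter.mp hl).1).1, (mem_filter.mp hl).2⟩
  have hmm : ∀ p ∈ Λ, mm T (fun l p => l ⊆ p) p + (p ∩ K).card = q + 2 := by
    intro p hp
    have hp' := mem_filter.mp hp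
    rw [← pg_tan_plane G K hcap hp'.1 x hp'.2 hx]
    unfold mm
    rw [hT, filter_filter]
    congr!
  have hfl : ∀ l ∈ T, Λ.filter (fun p => l ⊆ p) = P.filter (fun p => l ⊆ p) := by
    intro l hl
    rw [hΛ, filter_filter]
    refine filter_congr fun p _ => ?_
    exact ⟨fun h => h.2, fun h => ⟨h (hTm l hl).2.2, h⟩⟩
  have hKp : ∀ p ∈ Λ, 0 < (p ∩ K).card := by
    intro p hp
    exact card_pos.mpr ⟨x, mem_inter.mpr ⟨(mem_filter.mp hp).2, hx⟩⟩
  have huniq : ∀ l ∈ T, ∀ l' ∈ T, l ≠ l' → ∃! p, p ∈ Λ ∧ l ⊆ p ∧ l' ⊆ p := by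
    intro l hl l' hl' hne
    obtain ⟨p, hp, hu⟩ := pg_lines_plane_unique G (hTm l hl).2.1 (hTm l' hl').2.1 hne
      (hTm l hl).2.2 (hTm l' hl').2.2
    refine ⟨p, ?_, ?_⟩
    · have := hp.1
      rw [← hfl l hl, mem_filter] at this
      exact ⟨this.1, this.2, hp.2⟩
    · rintro p' ⟨h1, h2, h3⟩
      refine hu p' ⟨?_, h3⟩
      rw [← hfl l hl, mem_filter]
      exact ⟨h1, h2⟩
  have hm : ∀ p ∈ Λ, mm T (fun l p => l ⊆ p) p ≤ q + 1 := by
    intro p hp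
    have := hmm p hp
    have := hKp p hp
    omega
  have hS : ∀ l ∈ T, q ^ 2 + q ≤ ∑ p ∈ Λ.filter (fun p => l ⊆ p),
      mm T (fun l p => l ⊆ p) p * (mm T (fun l p => l ⊆ p) p - 1) := by
    intro l hl
    have h1 := pg_count G K hcap hcomp harc x hx l (hTm l hl).1 (hTm l hl).2.2
    have h2 := pg_sum_r G K (hTm l hl).2.1
    rw [(mem_filter.mp (hTm l hl).1).2] at h2
    rw [← hfl l hl] at h1 h2
    have h3 : ((∑ p ∈ Λ.filter (fun p => l ⊆ p),
      mm T (fun l p => l ⊆ p) p * (mm T (fun l p => l ⊆ p) p - 1) : ℕ) : ℤ) =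
      q * ∑ p ∈ Λ.filter (fun p => l ⊆ p), ((q : ℤ) + 2 - (p ∩ K).card) -
       ∑ p ∈ Λ.filter (fun p => l ⊆ p), (((p ∩ K).card : ℤ) - 1) * (q + 2 - (p ∩ K).card) := by
      push_cast
      rw [mul_sum, ← sum_sub_distrib]
      refine sum_congr rfl fun p hp => ?_
      rw [mem_filter] at hp
      have a1 := hmm p hp.1
      have a2 : 0 < mm T (fun l p => l ⊆ p) p := card_pos.mpr ⟨l, by
        simp only [mem_filter]; exact ⟨hl, hp.2⟩⟩
      rw [Nat.cast_sub a2]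
      have a3 : ((p ∩ K).card : ℤ) = q + 2 - mm T (fun l p => l ⊆ p) p := by omega
      rw [a3]
      push_cast
      ring
    have h4 : ((q ^ 2 + q : ℕ) : ℤ) ≤ ((∑ p ∈ Λ.filter (fun p => l ⊆ p),
      mm T (fun l p => l ⊆ p) p * (mm T (fun l p => l ⊆ p) p - 1) : ℕ) : ℤ) := by
      rw [h3, h2]
      push_cast
      have : (K.card : ℤ) = q ^ 2 + q + 2 - t := by
        have : ((t + K.card : ℕ) : ℤ) = ((q ^ 2 + q + 2 : ℕ) : ℤ) := by rw [ht]
        push_cast at this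
        linarith
      rw [this] at h1 ⊢
      nlinarith
    exact_mod_cast h4
  obtain ⟨p1, hp1, p2, hp2, hne, hcov, hq1, hq2⟩ := cl_main T Λ (fun l p => l ⊆ p) huniq q hq hm
    (by convert hS) (by omega) (by omega)
  have hD : ∀ l ∈ T, (Λ.filter (fun p => l ⊆ p)).card = q + 1 := by
    intro l hl
    rw [hfl l hl, pg_planes_line G (hTm l hl).2.1]
  obtain ⟨c1, c0⟩ := cl_counts T Λ (fun l p => l ⊆ p) huniq q (by convert hD) p1 p2 hp1 hp2 hne hcov
    (by omega) (by omega)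
  have hΛc : Λ.card = q ^ 2 + q + 1 := pg_planes_point G x
  have f1 : Λ.filter (fun p => mm T (fun l p => l ⊆ p) p = 1) =
      P.filter (fun p => x ∈ p ∧ (p ∩ K).card = q + 1) := by
    rw [← filter_filter]
    refine filter_congr fun p hp => ?_
    have := hmm p hp
    omega
  have f0 : Λ.filter (fun p => mm T (fun l p => l ⊆ p) p = 0) =
      P.filter (fun p => x ∈ p ∧ (p ∩ K).card = q + 2) := by
    rw [← filter_filter]
    refine filter_congr fun p hp => ?_
    have := hmm p hp
    omega
  rw [f1, hTc] at c1
  rw [f0, hTc, hΛc] at c0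
  have hm1 := hm p1 hp1
  have hm2 := hm p2 hp2
  -- relation between t and sizes
  have hun : t + (T.filter (fun l => l ⊆ p1 ∧ l ⊆ p2)).card =
      mm T (fun l p => l ⊆ p) p1 + mm T (fun l p => l ⊆ p) p2 := by
    unfold mm
    rw [← card_union_add_card_inter, ← hTc]
    congr 2
    · ext l
      simp only [mem_union, mem_filter]
      constructor
      · intro h
        exact (hcov l h).imp (fun h' => ⟨h, h'⟩) (fun h' => ⟨h, h'⟩)
      · rintro (h | h)
        · exact h.1
        · exact h.1
    · ext l
      simp only [mem_inter, mem_filter]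
      tauto
  have hin : (T.filter (fun l => l ⊆ p1 ∧ l ⊆ p2)).card ≤ 1 := by
    convert cl_inter T Λ (fun l p => l ⊆ p) huniq hp1 hp2 hne
  have hfull : (mm T (fun l p => l ⊆ p) p1 = q + 1 ∨ mm T (fun l p => l ⊆ p) p2 = q + 1) →
      (T.filter (fun l => l ⊆ p1 ∧ l ⊆ p2)).card = 1 := by
    intro hor
    have hp1' := mem_filter.mp hp1
    have hp2' := mem_filter.mp hp2
    have hl := G.meet_planes p1 hp1'.1 p2 hp2'.1 hne
    have key : ∀ p ∈ Λ, p1 ∩ p2 ⊆ p → mm T (fun l p => l ⊆ p) p = q + 1 → p1 ∩ p2 ∈ T := by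
      intro p hp hsub hmp
      have h1 := hmm p hp
      rw [hT, mem_filter]
      refine ⟨mem_filter.mpr ⟨hl, ?_⟩, mem_inter.mpr ⟨hp1'.2, hp2'.2⟩⟩
      apply le_antisymm
      · refine (card_le_card (inter_subset_inter_right hsub)).trans ?_
        omega
      · exact card_pos.mpr ⟨x, by simp [hp1'.2, hp2'.2, hx]⟩
    have hmem : p1 ∩ p2 ∈ T := by
      rcases hor with h | h
      · exact key p1 hp1 inter_subset_left h
      · exact key p2 hp2 inter_subset_right h
    apply le_antisymm hin
    exact card_pos.mpr ⟨p1 ∩ p2, mem_filter.mpr ⟨hmem, inter_subset_left, inter_subset_right⟩⟩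
  set m1 := mm T (fun l p => l ⊆ p) p1
  set m2 := mm T (fun l p => l ⊆ p) p2
  set ov := (T.filter (fun l => l ⊆ p1 ∧ l ⊆ p2)).card
  set n1 := (P.filter (fun p => x ∈ p ∧ (p ∩ K).card = q + 1)).card
  set n0 := (P.filter (fun p => x ∈ p ∧ (p ∩ K).card = q + 2)).card
  clear_value m1 m2 ov n1 n0
  have k1 : m1 = q ∨ m1 = q + 1 := by omega
  have k2 : m2 = q ∨ m2 = q + 1 := by omega
  have hne1 : ∀ P1 : Prop, (P1 ↔ P1) := fun _ => Iff.rfl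
  have hqz : (2048 : ℤ) ≤ q := by exact_mod_cast hq
  rcases k1 with rfl | rfl <;> rcases k2 with h | h
  · subst h
    have : ov = 0 ∨ ov = 1 := by omega
    rcases this with h | h
    · right; right; right
      have ht' : t = 2 * m2 := by omega
      subst ht'
      push_cast at c1 c0
      ring_nf at c1 c0
      refine ⟨rfl, ?_, ?_⟩
      · have : (n1 : ℤ) = 0 := by linarith
        exact_mod_cast this
      · have : (n0 : ℤ) + 1 = m2 := by linarith
        exact_mod_cast this
    · right; left
      have ht' : (t : ℤ) = 2 * m2 - 1 := by omega
      refine ⟨by omega, ?_⟩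
      rw [ht'] at c0
      push_cast at c0
      ring_nf at c0
      have : (n0 : ℤ) = 1 := by linarith
      exact_mod_cast this
  · right; right; left
    have h1 := hfull (Or.inr h)
    subst h
    have ht' : t = 2 * m1 := by omega
    subst ht'
    push_cast at c1 c0
    ring_nf at c1 c0
    refine ⟨rfl, ?_, ?_⟩
    · have : (n1 : ℤ) + 1 = 2 * m1 := by linarith
      exact_mod_cast this
    · have : (n0 : ℤ) = 0 := by linarith
      exact_mod_cast this
  · right; right; left
    have h1 := hfull (Or.inl rfl)
    subst h
    have ht' : t = 2 * m2 := by omega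
    subst ht'
    push_cast at c1 c0
    ring_nf at c1 c0
    refine ⟨rfl, ?_, ?_⟩
    · have : (n1 : ℤ) + 1 = 2 * m2 := by linarith
      exact_mod_cast this
    · have : (n0 : ℤ) = 0 := by linarith
      exact_mod_cast this
  · left
    have h1 := hfull (Or.inl rfl)
    subst h
    have ht' : t = 2 * q + 1 := by omega
    subst ht'
    push_cast at c1
    ring_nf at c1
    refine ⟨rfl, ?_⟩
    have : (n1 : ℤ) + 1 = q := by linarith
    exact_mod_cast this

theorem pg_dc (v c : ℕ) (h : ∀ x ∈ K, (P.filter (fun p => x ∈ p ∧ (p ∩ K).card = v)).card = c) :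
    v ∣ K.card * c := by
  have h1 := Finset.sum_card_bipartiteAbove_eq_sum_card_bipartiteBelow
    (s := K) (t := P.filter (fun p => (p ∩ K).card = v)) (fun x p => x ∈ p)
  simp only [Finset.bipartiteAbove, Finset.bipartiteBelow] at h1
  rw [sum_congr rfl (g := fun _ => c), sum_const,
    sum_congr (s₁ := P.filter (fun p => (p ∩ K).card = v)) rfl (g := fun _ => v), sum_const] at h1
  · simp only [smul_eq_mul] at h1
    rw [h1]
    exact Dvd.intro_left _ rfl
  · intro p hp
    rw [mem_filter] at hp
    rw [← hp.2]
    congr 1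
    ext y
    simp [and_comm]
  · intro x hx
    rw [← h x hx, filter_filter]
    congr 1
    ext p
    simp only [mem_filter]
    tauto

include G hcap hcomp harc in
theorem pg_final (hq : 2048 ≤ q) (t : ℕ) (ht : t + K.card = q ^ 2 + q + 2)
    (ht1 : q + 1 < t) (ht2 : t + 135 ≤ 3 * q) : False := by
  have hloc := pg_local G K hcap hcomp harc hq t ht ht1 ht2
  have hK : (K.card : ℤ) = q ^ 2 + q + 2 - t := by
    have : ((t + K.card : ℕ) : ℤ) = ((q ^ 2 + q + 2 : ℕ) : ℤ) := by rw [ht]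
    push_cast at this
    linarith
  have hKpos : 0 < K.card := by nlinarith
  obtain ⟨x0, hx0⟩ := card_pos.mp hKpos
  have hdiv : ∀ v c : ℕ, v ∣ K.card * c → ∀ e f : ℤ, f ≠ 0 → (K.card : ℤ) * c = v * e + f →
      |f| < v → False := by
    intro v c hv e f hf he hlt
    have h1 : (v : ℤ) ∣ f := by
      have h2 : (v : ℤ) ∣ (K.card : ℤ) * c := by exact_mod_cast hv
      rw [he] at h2
      exact (Int.dvd_add_right (Dvd.intro _ rfl)).mp h2
    have := Int.le_of_dvd (abs_pos.mpr hf) ((dvd_abs _ _).mpr h1)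
    omega
  have hq' : (2048 : ℤ) ≤ q := by exact_mod_cast hq
  have case_t : t = 2 * q + 1 ∨ t + 1 = 2 * q ∨ t = 2 * q := by
    rcases hloc x0 hx0 with h | h | h | h <;> omega
  rcases case_t with h | h | h
  · have h1 := pg_dc (P := P) K (q + 1) (q - 1) (by
      intro x hx
      rcases hloc x hx with h | h | h | h <;> omega)
    have hc : ((q - 1 : ℕ) : ℤ) = q - 1 := by omega
    refine hdiv _ _ h1 ((q : ℤ) ^ 2 - 3 * q + 5) (-6) (by norm_num) ?_ ?_
    · rw [hK, hc, h]; push_cast; ring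
    · push_cast; norm_num; linarith
  · have h1 := pg_dc (P := P) K (q + 2) 1 (by
      intro x hx
      rcases hloc x hx with h | h | h | h <;> omega)
    have hc : (t : ℤ) = 2 * q - 1 := by omega
    refine hdiv _ _ h1 ((q : ℤ) - 3) 9 (by norm_num) ?_ ?_
    · rw [hK, hc]; push_cast; ring
    · push_cast; norm_num; linarith
  · by_cases hA : ∀ x ∈ K, (P.filter (fun p => x ∈ p ∧ (p ∩ K).card = q + 2)).card = 0
    · have h1 := pg_dc (P := P) K (q + 1) (2 * q - 1) (by
        intro x hx
        have := hA x hx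
        rcases hloc x hx with h | h | h | h <;> omega)
      have hc : ((2 * q - 1 : ℕ) : ℤ) = 2 * q - 1 := by omega
      refine hdiv _ _ h1 (2 * (q : ℤ) ^ 2 - 5 * q + 10) (-12) (by norm_num) ?_ ?_
      · rw [hK, hc, h]; push_cast; ring
      · push_cast; norm_num; linarith
    · by_cases hB : ∀ x ∈ K, (P.filter (fun p => x ∈ p ∧ (p ∩ K).card = q + 1)).card = 0
      · have h1 := pg_dc (P := P) K (q + 2) (q - 1) (by
          intro x hx
          have := hB x hx
          rcases hloc x hx with h | h | h | h <;> omega)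
        have hc : ((q - 1 : ℕ) : ℤ) = q - 1 := by omega
        refine hdiv _ _ h1 ((q : ℤ) ^ 2 - 4 * q + 11) (-24) (by norm_num) ?_ ?_
        · rw [hK, hc, h]; push_cast; ring
        · push_cast; norm_num; linarith
      · push Not at hA hB
        obtain ⟨x, hx, hx1⟩ := hA
        obtain ⟨y, hy, hy1⟩ := hB
        have hx2 : (P.filter (fun p => x ∈ p ∧ (p ∩ K).card = q + 1)).card = 0 := by
          rcases hloc x hx with h | h | h | h <;> omega
        have hy2 : (P.filter (fun p => y ∈ p ∧ (p ∩ K).card = q + 2)).card = 0 := by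
          rcases hloc y hy with h | h | h | h <;> omega
        have hxy : x ≠ y := by
          rintro rfl
          omega
        obtain ⟨l, hl, hxl, hyl⟩ := G.join x y hxy
        have hl2 : (l ∩ K).card = 2 := by
          apply le_antisymm (hcap l hl)
          exact one_lt_card.mpr ⟨x, by simp [hx, hxl], y, by simp [hy, hyl], hxy⟩
        have h2 := pg_sum_r G K hl
        rw [hl2, hK, h] at h2
        have h3 : ((P.filter (fun p => l ⊆ p)).card : ℤ) * 2 ≤
            ∑ p ∈ P.filter (fun p => l ⊆ p), ((q : ℤ) + 2 - (p ∩ K).card) := by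
          rw [← nsmul_eq_mul]
          refine card_nsmul_le_sum _ _ _ fun p hp => ?_
          rw [mem_filter] at hp
          have a1 := pg_tan_plane G K hcap hp.1 x (hp.2 hxl) hx
          rw [card_eq_zero, filter_eq_empty_iff] at hx2 hy2
          have a2 : (p ∩ K).card ≠ q + 1 := fun h => hx2 hp.1 ⟨hp.2 hxl, h⟩
          have a3 : (p ∩ K).card ≠ q + 2 := fun h => hy2 hp.1 ⟨hp.2 hyl, h⟩
          omega
        rw [h2, pg_planes_line G hl] at h3
        push_cast at h3
        nlinarith
end PG3

section ARC
open Classical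

variable {F : Type*} [Field F]

/-- explicit determinant -/
def D3 (u v w : Fin 3 → F) : F :=
  u 0 * (v 1 * w 2 - v 2 * w 1) - u 1 * (v 0 * w 2 - v 2 * w 0) + u 2 * (v 0 * w 1 - v 1 * w 0)

theorem D3_cramer (p z w b : Fin 3 → F) :
    D3 p z w • b = D3 b z w • p + D3 p b w • z + D3 p z b • w := by
  funext i
  simp only [Pi.smul_apply, Pi.add_apply, smul_eq_mul, D3]
  fin_cases i <;> simp <;> ring

theorem D3_form (u : Module.Dual F (Fin 3 → F)) (p z w b : Fin 3 → F) (hu : u p = 0) :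
    u b * D3 p z w = u z * D3 p b w + u w * D3 p z b := by
  have h := congrArg u (D3_cramer p z w b)
  simp only [map_add, map_smul, smul_eq_mul, hu] at h
  linear_combination h

theorem D3_swap (p b c : Fin 3 → F) : D3 p b c = - D3 p c b := by
  simp only [D3]; ring

theorem D3_swap1 (p b c : Fin 3 → F) : D3 p b c = - D3 b p c := by
  simp only [D3]; ring

theorem D3_self (p b : Fin 3 → F) : D3 p b b = 0 := by
  simp only [D3]; ring

theorem D3_self1 (p b : Fin 3 → F) : D3 p b p = 0 := by
  simp only [D3]; ring

theorem D3_pl (a b c x y : Fin 3 → F) :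
    D3 a b x * D3 a c y - D3 a b y * D3 a c x = - D3 a b c * D3 a y x  := by
  simp only [D3]; ring

theorem arc_red (p z : Fin 3 → F) (g : (Fin 3 → F) → F) (N : Finset (Fin 3 → F)) (hz : z ∈ N)
    (hN : ∀ b ∈ N, ∀ c ∈ N, b ≠ c → D3 p b c ≠ 0) :
    ∑ b ∈ N, g b * D3 p z b / ∏ c ∈ N.erase b, D3 p c b =
    ∑ b ∈ N.erase z, g b / ∏ c ∈ (N.erase z).erase b, D3 p c b := by
  rw [← add_sum_erase _ _ hz, D3_self, mul_zero, zero_div, zero_add]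
  refine sum_congr rfl fun b hb => ?_
  rw [mem_erase] at hb
  have h1 : z ∈ N.erase b := mem_erase.mpr ⟨hb.1.symm, hz⟩
  rw [← mul_prod_erase _ _ h1, erase_right_comm]
  have := hN z hz b hb.2 hb.1.symm
  rw [mul_comm, mul_div_mul_left _ _ this]

theorem arc_N (p : Fin 3 → F) (U : Finset (Module.Dual F (Fin 3 → F))) :
    ∀ N : Finset (Fin 3 → F), N.card = U.card + 2 → (∀ u ∈ U, u p = 0) →
    (∀ b ∈ N, ∀ c ∈ N, b ≠ c → D3 p b c ≠ 0) →
    ∑ b ∈ N, (∏ u ∈ U, u b) / ∏ c ∈ N.erase b, D3 p c b = 0 := by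
  induction U using Finset.induction_on with
  | empty =>
    intro N hc _ hN
    obtain ⟨z, w, hzw, rfl⟩ := card_eq_two.mp hc
    have e1 : ({z, w} : Finset (Fin 3 → F)).erase z = {w} := by
      ext y; simp only [mem_erase, mem_insert, mem_singleton]
      constructor
      · rintro ⟨h, h' | h'⟩ <;> tauto
      · rintro rfl; exact ⟨hzw.symm, Or.inr rfl⟩
    have e2 : ({z, w} : Finset (Fin 3 → F)).erase w = {z} := by
      ext y; simp only [mem_erase, mem_insert, mem_singleton]
      constructor
      · rintro ⟨h, h' | h'⟩ <;> tauto
      · rintro rfl; exact ⟨hzw, Or.inl rfl⟩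
    rw [sum_pair hzw, e1, e2]
    simp only [prod_empty, prod_singleton]
    rw [D3_swap p w z, div_neg]; ring
  | insert u U hu ih =>
    intro N hc hp hN
    rw [card_insert_of_notMem hu] at hc
    obtain ⟨z, hz, w, hw, hzw⟩ := one_lt_card.mp (show 1 < N.card by omega)
    have hup := hp u (mem_insert_self _ _)
    have hd := hN z hz w hw hzw
    have ihx : ∀ y ∈ N, ∑ b ∈ N, (∏ u ∈ U, u b) * D3 p y b / ∏ c ∈ N.erase b, D3 p c b = 0 := by
      intro y hy
      rw [arc_red p y (fun b => ∏ u ∈ U, u b) N hy hN]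
      refine ih _ ?_ (fun v hv => hp v (mem_insert_of_mem hv)) ?_
      · rw [card_erase_of_mem hy]; omega
      · intro b hb c hc; exact hN b (mem_of_mem_erase hb) c (mem_of_mem_erase hc)
    have key : ∀ b, (∏ v ∈ insert u U, v b) / ∏ c ∈ N.erase b, D3 p c b =
        u w / D3 p z w * ((∏ u ∈ U, u b) * D3 p z b / ∏ c ∈ N.erase b, D3 p c b) -
        u z / D3 p z w * ((∏ u ∈ U, u b) * D3 p w b / ∏ c ∈ N.erase b, D3 p c b) := by
      intro b
      rw [prod_insert hu]
      have h := D3_form u p z w b hup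
      have h2 : u b = (u w * D3 p z b - u z * D3 p w b) / D3 p z w := by
        rw [eq_div_iff hd, h, D3_swap p b w]; ring
      rw [h2]; ring
    rw [sum_congr rfl (fun b _ => key b), sum_sub_distrib, ← mul_sum, ← mul_sum, ihx z hz, ihx w hw]
    ring

variable [CharP F 2]

theorem D3_s2 (p b c : Fin 3 → F) : D3 p b c = D3 p c b := by
  rw [D3_swap, CharTwo.neg_eq]

theorem D3_s1 (p b c : Fin 3 → F) : D3 p b c = D3 b p c := by
  rw [D3_swap1, CharTwo.neg_eq]

theorem arc_concl (A R : Finset (Fin 3 → F)) (U : (Fin 3 → F) → Finset (Module.Dual F (Fin 3 → F)))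
    (l : (Fin 3 → F) → F) (r : ℕ)
    (hD : ∀ a ∈ A, ∀ b ∈ A, ∀ c ∈ A, a ≠ b → a ≠ c → b ≠ c → D3 a b c ≠ 0)
    (hU0 : ∀ a ∈ A, ∀ u ∈ U a, u a = 0)
    (hUc : ∀ a ∈ A, (U a).card = r)
    (hl : ∀ a ∈ A, l a ≠ 0)
    (hsym : ∀ a ∈ A, ∀ b ∈ A, a ≠ b → l a * (∏ u ∈ U a, u b) = l b * ∏ u ∈ U b, u a)
    (hRA : R ⊆ A) (hR : R.card = r + 1) (Q : Fin 3 → F) (hQA : Q ∉ A)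
    (hQ : ∀ a ∈ R, ∀ b ∈ A, a ≠ b → D3 a b Q ≠ 0)
    (hR0 : ∀ a ∈ R, ∏ u ∈ U a, u Q = 0)
    (P : Fin 3 → F) (hP : P ∈ A) (hPR : P ∉ R) : ∏ u ∈ U P, u Q = 0 := by
  have hQR : Q ∉ R := fun h => hQA (hRA h)
  have hPQ : P ≠ Q := fun h => hQA (h ▸ hP)
  have hneP : ∀ i ∈ R, i ≠ P := fun i hi h => hPR (h ▸ hi)
  have hneQ : ∀ i ∈ R, i ≠ Q := fun i hi h => hQR (h ▸ hi)
  -- first relation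
  have n1 := arc_N P (U P) (insert Q R) (by rw [card_insert_of_notMem hQR, hR, hUc P hP])
    (hU0 P hP) (by
      intro b hb c hc hbc
      rw [mem_insert] at hb hc
      rcases hb with rfl | hb <;> rcases hc with rfl | hc
      · exact absurd rfl hbc
      · rw [D3_s2, D3_s1]; exact hQ c hc P hP (hneP c hc)
      · rw [D3_s1]; exact hQ b hb P hP (hneP b hb)
      · exact hD P hP b (hRA hb) c (hRA hc) (hneP b hb).symm (hneP c hc).symm hbc)
  rw [sum_insert hQR, erase_insert hQR] at n1
  -- second relations
  let h : (Fin 3 → F) → (Fin 3 → F) → F := fun i j =>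
    l i * (∏ u ∈ U i, u j) / (D3 i P j * (D3 i Q j * ∏ c ∈ (R.erase i).erase j, D3 i c j))
  have n2 : ∀ i ∈ R, l P * ((∏ u ∈ U P, u i) / ∏ c ∈ (insert Q R).erase i, D3 P c i) +
      ∑ j ∈ R.erase i, h i j = 0 := by
    intro i hi
    have hQi : Q ∉ R.erase i := fun h => hQR (mem_of_mem_erase h)
    have hPi : P ∉ insert Q (R.erase i) := by
      rw [mem_insert]; rintro (h | h)
      · exact hPQ h
      · exact hPR (mem_of_mem_erase h)
    have n := arc_N i (U i) (insert P (insert Q (R.erase i))) (by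
      rw [card_insert_of_notMem hPi, card_insert_of_notMem hQi, card_erase_of_mem hi, hR,
        hUc i (hRA hi)]; omega) (hU0 i (hRA hi)) (by
      intro b hb c hc hbc
      have hx : ∀ b, b ∈ insert P (insert Q (R.erase i)) → b = Q ∨ (b ∈ A ∧ b ≠ i) := by
        intro b hb
        simp only [mem_insert, mem_erase] at hb
        rcases hb with rfl | rfl | hb
        · exact Or.inr ⟨hP, (hneP i hi).symm⟩
        · exact Or.inl rfl
        · exact Or.inr ⟨hRA hb.2, hb.1⟩
      rcases hx b hb with rfl | ⟨hb2, hb'⟩ <;> rcases hx c hc with rfl | ⟨hc2, hc'⟩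
      · exact absurd rfl hbc
      · rw [D3_s2]; exact hQ i hi c hc2 hc'.symm
      · exact hQ i hi b hb2 hb'.symm
      · exact hD i (hRA hi) b hb2 c hc2 hb'.symm hc'.symm hbc)
    rw [sum_insert hPi, sum_insert hQi, erase_insert hPi, hR0 i hi, zero_div, zero_add,
      prod_insert hQi] at n
    have hn := congrArg (fun x => l i * x) n
    simp only [mul_add, mul_zero, mul_sum] at hn
    rw [← hn]
    congr 1
    · rw [erase_insert_of_ne (hneQ i hi).symm, prod_insert hQi, ← mul_div_assoc, ← mul_div_assoc,
        hsym P hP i (hRA hi) (hneP i hi).symm]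
      congr 2
      · rw [D3_s2, D3_s1, D3_s2]
      · refine prod_congr rfl fun j hj => ?_
        rw [D3_s2, D3_s1, D3_s2]
    · refine sum_congr rfl fun j hj => ?_
      have hj' := mem_erase.mp hj
      have hPj : P ∉ (insert Q (R.erase i)).erase j := fun h => hPi (mem_of_mem_erase h)
      have hQj : Q ∉ (R.erase i).erase j := fun h => hQi (mem_of_mem_erase h)
      rw [erase_insert_of_ne (hneP j hj'.2).symm, erase_insert_of_ne (hneQ j hj'.2).symm,
        prod_insert (by rw [← erase_insert_of_ne (hneQ j hj'.2).symm]; exact hPj),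
        prod_insert hQj, ← mul_div_assoc]
  have hh : ∑ i ∈ R, ∑ j ∈ R.erase i, h i j = 0 := by
    have e : ∑ i ∈ R, ∑ j ∈ R.erase i, h i j =
        ∑ x ∈ R.offDiag, h x.1 x.2 := by
      rw [sum_sigma']
      refine sum_bij' (fun x _ => (x.1, x.2)) (fun x _ => ⟨x.1, x.2⟩) ?_ ?_ ?_ ?_ ?_
      · rintro ⟨i, j⟩ hx
        simp only [mem_sigma, mem_erase, mem_offDiag] at hx ⊢
        exact ⟨hx.1, hx.2.2, hx.2.1.symm⟩
      · rintro ⟨i, j⟩ hx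
        simp only [mem_sigma, mem_erase, mem_offDiag] at hx ⊢
        exact ⟨hx.1, Ne.symm hx.2.2, hx.2.1⟩
      · intros; rfl
      · intros; rfl
      · intros; rfl
    rw [e]
    refine sum_involution (fun x _ => (x.2, x.1)) ?_ ?_ ?_ ?_
    · rintro ⟨i, j⟩ hx
      rw [mem_offDiag] at hx
      have : h i j = h j i := by
        simp only [h]
        rw [hsym i (hRA hx.1) j (hRA hx.2.1) hx.2.2, erase_right_comm]
        congr 2
        · rw [D3_s2, D3_s1, D3_s2]
        · congr 1
          · rw [D3_s2, D3_s1, D3_s2]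
          · refine prod_congr rfl fun c hc => ?_
            rw [D3_s2, D3_s1, D3_s2]
      simp only
      rw [this, CharTwo.add_self_eq_zero]
    · rintro ⟨i, j⟩ hx _ h
      rw [mem_offDiag] at hx
      exact hx.2.2 (Prod.ext_iff.mp h).2
    · rintro ⟨i, j⟩ hx
      rw [mem_offDiag] at hx ⊢
      exact ⟨hx.2.1, hx.1, hx.2.2.symm⟩
    · intros; rfl
  have hs := sum_eq_zero n2
  rw [sum_add_distrib, hh, add_zero, ← mul_sum] at hs
  have hs' := (mul_eq_zero.mp hs).resolve_left (hl P hP)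
  rw [hs', add_zero, div_eq_zero_iff] at n1
  refine n1.resolve_right ?_
  rw [← ne_eq, prod_ne_zero_iff]
  intro j hj
  rw [D3_s1]; exact hQ j hj P hP (hneP j hj)

theorem prod_nonzero [Fintype F] (S : Finset F) (h0 : (0 : F) ∉ S)
    (hS : S.card + 1 = Fintype.card F) : ∏ x ∈ S, x = 1 := by
  have hS' : S = univ.erase 0 := by
    refine eq_of_subset_of_card_le (fun x hx => mem_erase.mpr ⟨fun h => h0 (h ▸ hx), mem_univ _⟩) ?_
    rw [card_erase_of_mem (mem_univ _), card_univ]; omega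
  have h := FiniteField.prod_univ_units_id_eq_neg_one (K := F)
  have h2 := congrArg (Units.coeHom F) h
  rw [map_prod] at h2
  simp only [Units.coeHom_apply, Units.val_neg, Units.val_one, CharTwo.neg_eq] at h2
  rw [← h2, hS']
  symm
  refine prod_bij (fun u _ => (u : F)) ?_ ?_ ?_ ?_
  · intro u _; exact mem_erase.mpr ⟨u.ne_zero, mem_univ _⟩
  · intro u _ v _ h; exact Units.ext h
  · intro x hx; exact ⟨Units.mk0 x (mem_erase.mp hx).1, mem_univ _, rfl⟩
  · intros; rfl

section main
variable [Fintype F] (A : Finset (Fin 3 → F)) (U : (Fin 3 → F) → Finset (Module.Dual F (Fin 3 → F)))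
    (hD : ∀ a ∈ A, ∀ b ∈ A, ∀ c ∈ A, a ≠ b → a ≠ c → b ≠ c → D3 a b c ≠ 0)
    (hU0 : ∀ a ∈ A, ∀ u ∈ U a, u a = 0)
    (hUne : ∀ a ∈ A, ∀ u ∈ U a, ∀ b ∈ A, b ≠ a → u b ≠ 0)
    (hUp : ∀ a ∈ A, ∀ u ∈ U a, ∀ v ∈ U a, ∀ c : F, u = c • v → u = v)
    (hUc : ∀ a ∈ A, (U a).card + A.card = Fintype.card F + 2)

include hD hU0 hUne hUp hUc in
theorem arc_slopes (a b c : Fin 3 → F) (ha : a ∈ A) (hb : b ∈ A) (hc : c ∈ A)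
    (hab : a ≠ b) (hac : a ≠ c) (hbc : b ≠ c) :
    (∏ u ∈ U a, u b / u c) * ∏ x ∈ ((A.erase a).erase b).erase c, D3 a b x / D3 a c x = 1 := by
  set N := ((A.erase a).erase b).erase c with hN
  have hNm : ∀ x ∈ N, x ≠ c ∧ x ≠ b ∧ x ≠ a ∧ x ∈ A := by
    intro x hx
    simpa only [hN, mem_erase, and_assoc] using hx
  have hNc : N.card + 3 = A.card := by
    have h1 : b ∈ A.erase a := mem_erase.mpr ⟨hab.symm, hb⟩
    have h2 : c ∈ (A.erase a).erase b := mem_erase.mpr ⟨hbc.symm, mem_erase.mpr ⟨hac.symm, hc⟩⟩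
    have i1 := card_erase_add_one ha
    have i2 := card_erase_add_one h1
    have i3 := card_erase_add_one h2
    rw [← hN] at i3
    omega
  have dabc := hD a ha b hb c hc hab hac hbc
  have dx : ∀ x ∈ N, D3 a b x ≠ 0 ∧ D3 a c x ≠ 0 := fun x hx =>
    ⟨hD a ha b hb x (hNm x hx).2.2.2 hab (hNm x hx).2.2.1.symm (hNm x hx).2.1.symm,
     hD a ha c hc x (hNm x hx).2.2.2 hac (hNm x hx).2.2.1.symm (hNm x hx).1.symm⟩
  have inj1 : Set.InjOn (fun u : Module.Dual F (Fin 3 → F) => u b / u c) (U a) := by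
    intro u hu v hv h
    have hu := mem_coe.mp hu
    have hv := mem_coe.mp hv
    have uc := hUne a ha u hu c hc hac.symm
    have vc := hUne a ha v hv c hc hac.symm
    simp only at h
    rw [div_eq_div_iff uc vc] at h
    refine hUp a ha u hu v hv (u c / v c) ?_
    refine LinearMap.ext fun x => ?_
    have e1 := D3_form u a b c x (hU0 a ha u hu)
    have e2 := D3_form v a b c x (hU0 a ha v hv)
    simp only [LinearMap.smul_apply, smul_eq_mul]
    rw [div_mul_eq_mul_div, eq_div_iff vc]
    apply mul_right_cancel₀ dabc
    linear_combination v c * e1 - u c * e2 + D3 a x c * h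
  have inj2 : Set.InjOn (fun x : Fin 3 → F => D3 a b x / D3 a c x) N := by
    intro x hx y hy h
    have hx := mem_coe.mp hx
    have hy := mem_coe.mp hy
    simp only at h
    rw [div_eq_div_iff (dx x hx).2 (dx y hy).2] at h
    by_contra hxy
    have := D3_pl a b c x y
    rw [h, sub_self] at this
    have h3 := hD a ha y (hNm y hy).2.2.2 x (hNm x hx).2.2.2 (hNm y hy).2.2.1.symm
      (hNm x hx).2.2.1.symm (Ne.symm hxy)
    exact mul_ne_zero (neg_ne_zero.mpr dabc) h3 this.symm
  rw [← prod_image (g := fun u : Module.Dual F (Fin 3 → F) => u b / u c) (f := fun x => x) inj1,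
    ← prod_image (g := fun x : Fin 3 → F => D3 a b x / D3 a c x) (f := fun x => x) inj2]
  have hdis : Disjoint ((U a).image (fun u : Module.Dual F (Fin 3 → F) => u b / u c))
      (N.image (fun x : Fin 3 → F => D3 a b x / D3 a c x)) := by
    rw [disjoint_left]
    intro y hy hy'
    obtain ⟨u, hu, rfl⟩ := mem_image.mp hy
    obtain ⟨x, hx, h⟩ := mem_image.mp hy'
    have uc := hUne a ha u hu c hc hac.symm
    rw [div_eq_div_iff (dx x hx).2 uc] at h
    have e := D3_form u a c x b (hU0 a ha u hu)
    have : u x * D3 a c b = 0 := by linear_combination -e - h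
    rw [D3_s2] at this
    exact mul_ne_zero (hUne a ha u hu x (hNm x hx).2.2.2 (hNm x hx).2.2.1) dabc this
  rw [← prod_union hdis]
  refine prod_nonzero _ ?_ ?_
  · rw [mem_union, mem_image, mem_image]
    rintro (⟨u, hu, h⟩ | ⟨x, hx, h⟩)
    · exact div_ne_zero (hUne a ha u hu b hb hab.symm) (hUne a ha u hu c hc hac.symm) h
    · exact div_ne_zero (dx x hx).1 (dx x hx).2 h
  · rw [card_union_of_disjoint hdis, card_image_of_injOn inj1, card_image_of_injOn inj2]
    have := hUc a ha
    omega

include hD hU0 hUne hUp hUc in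
theorem arc_segre (a b c : Fin 3 → F) (ha : a ∈ A) (hb : b ∈ A) (hc : c ∈ A)
    (hab : a ≠ b) (hac : a ≠ c) (hbc : b ≠ c) :
    (∏ u ∈ U a, u b) * (∏ u ∈ U b, u c) * (∏ u ∈ U c, u a) =
    (∏ u ∈ U b, u a) * (∏ u ∈ U c, u b) * (∏ u ∈ U a, u c) := by
  have h1 := arc_slopes A U hD hU0 hUne hUp hUc a b c ha hb hc hab hac hbc
  have h2 := arc_slopes A U hD hU0 hUne hUp hUc b c a hb hc ha hbc hab.symm hac.symm
  have h3 := arc_slopes A U hD hU0 hUne hUp hUc c a b hc ha hb hac.symm hbc.symm hab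
  have e2 : ((A.erase b).erase c).erase a = ((A.erase a).erase b).erase c := by
    ext x; simp only [mem_erase]; tauto
  have e3 : ((A.erase c).erase a).erase b = ((A.erase a).erase b).erase c := by
    ext x; simp only [mem_erase]; tauto
  rw [e2] at h2
  rw [e3] at h3
  have hNm : ∀ x ∈ ((A.erase a).erase b).erase c, x ≠ c ∧ x ≠ b ∧ x ≠ a ∧ x ∈ A := by
    intro x hx
    simpa only [mem_erase, and_assoc] using hx
  set N := ((A.erase a).erase b).erase c with hN
  have hN1 : (∏ x ∈ N, D3 a b x / D3 a c x) * (∏ x ∈ N, D3 b c x / D3 b a x) *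
      (∏ x ∈ N, D3 c a x / D3 c b x) = 1 := by
    rw [← prod_mul_distrib, ← prod_mul_distrib]
    refine prod_eq_one fun x hx => ?_
    obtain ⟨n1, n2, n3, n4⟩ := hNm x hx
    have d1 := hD a ha b hb x n4 hab n3.symm n2.symm
    have d2 := hD a ha c hc x n4 hac n3.symm n1.symm
    have d3 := hD b hb c hc x n4 hbc n2.symm n1.symm
    rw [D3_s1 b a x, D3_s1 c a x, D3_s1 c b x]
    field_simp
  have hf : (∏ u ∈ U a, u b / u c) * (∏ u ∈ U b, u c / u a) * (∏ u ∈ U c, u a / u b) = 1 := by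
    have : ((∏ u ∈ U a, u b / u c) * (∏ u ∈ U b, u c / u a) * (∏ u ∈ U c, u a / u b)) *
      ((∏ x ∈ N, D3 a b x / D3 a c x) * (∏ x ∈ N, D3 b c x / D3 b a x) *
      (∏ x ∈ N, D3 c a x / D3 c b x)) = 1 := by
      calc _ = ((∏ u ∈ U a, u b / u c) * ∏ x ∈ N, D3 a b x / D3 a c x) *
              ((∏ u ∈ U b, u c / u a) * ∏ x ∈ N, D3 b c x / D3 b a x) *
              ((∏ u ∈ U c, u a / u b) * ∏ x ∈ N, D3 c a x / D3 c b x) := by ring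
        _ = 1 := by rw [h1, h2, h3]; ring
    rwa [hN1, mul_one] at this
  rw [prod_div_distrib, prod_div_distrib, prod_div_distrib] at hf
  have z1 : ∏ u ∈ U a, u c ≠ 0 := prod_ne_zero_iff.mpr fun u hu => hUne a ha u hu c hc hac.symm
  have z2 : ∏ u ∈ U b, u a ≠ 0 := prod_ne_zero_iff.mpr fun u hu => hUne b hb u hu a ha hab
  have z3 : ∏ u ∈ U c, u b ≠ 0 := prod_ne_zero_iff.mpr fun u hu => hUne c hc u hu b hb hbc
  field_simp at hf
  linear_combination hf

include hD hU0 hUne hUp hUc in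
theorem arc_main (Q : Fin 3 → F) (hQ : ∀ a ∈ A, ∃ x, D3 a x Q ≠ 0)
    (hbi : ∃ a ∈ A, ∀ u ∈ U a, u Q ≠ 0) :
    (A.filter (fun a => ∃ u ∈ U a, u Q = 0)).card + A.card ≤ Fintype.card F + 2 := by
  obtain ⟨P, hP, hPQ⟩ := hbi
  by_contra hcon
  push Not at hcon
  have hr := hUc P hP
  obtain ⟨R, hR, hRc⟩ := exists_subset_card_eq (show (U P).card + 1 ≤
    (A.filter (fun a => ∃ u ∈ U a, u Q = 0)).card by omega)
  have hRm : ∀ a ∈ R, a ∈ A ∧ ∃ u ∈ U a, u Q = 0 := fun a ha => mem_filter.mp (hR ha)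
  have hnz : ∀ a ∈ A, ∀ b ∈ A, b ≠ a → ∏ u ∈ U a, u b ≠ 0 := fun a ha b hb h =>
    prod_ne_zero_iff.mpr fun u hu => hUne a ha u hu b hb h
  have := arc_concl A R U
    (fun a => if a = P then 1 else (∏ u ∈ U P, u a) / (∏ u ∈ U a, u P)) (U P).card hD hU0
    (fun a ha => by have := hUc a ha; omega)
    (by
      intro a ha
      split_ifs with h
      · exact one_ne_zero
      · exact div_ne_zero (hnz P hP a ha h) (hnz a ha P hP (Ne.symm h)))
    (by
      intro a ha b hb hab
      split_ifs with h1 h2 h2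
      · exact absurd (h1.trans h2.symm) hab
      · subst h1
        have := hnz b hb a ha (Ne.symm h2)
        field_simp
      · subst h2
        have := hnz a ha b hb (Ne.symm h1)
        field_simp
      · have z1 := hnz a ha P hP (Ne.symm h1)
        have z2 := hnz b hb P hP (Ne.symm h2)
        have s := arc_segre A U hD hU0 hUne hUp hUc P a b hP ha hb (Ne.symm h1) (Ne.symm h2) hab
        field_simp
        linear_combination s)
    (fun a ha => (hRm a ha).1) hRc Q
    (fun h => by
      obtain ⟨x, hx⟩ := hQ Q h
      exact hx (D3_self1 Q x))
    (by
      intro a ha b hb hab h0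
      obtain ⟨haA, u, hu, huQ⟩ := hRm a ha
      obtain ⟨x, hx⟩ := hQ a haA
      have e := D3_form u a b Q x (hU0 a haA u hu)
      rw [h0, huQ, mul_zero, zero_mul, add_zero] at e
      exact mul_ne_zero (hUne a haA u hu b hb hab.symm) hx e.symm)
    (by
      intro a ha
      obtain ⟨haA, u, hu, huQ⟩ := hRm a ha
      exact prod_eq_zero hu huQ)
    P hP (fun h => by
      obtain ⟨_, u, hu, huQ⟩ := hRm P h
      exact hPQ u hu huQ)
  obtain ⟨u, hu, h0⟩ := prod_eq_zero_iff.mp this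
  exact hPQ u hu h0
end main
end ARC

section HARC
open Classical

theorem pg_harc {X : Type*} [Fintype X] {q : ℕ} {L P : Finset (Finset X)} (G : PG3 q L P)
    (K : Finset X) (hcap : ∀ l ∈ L, (l ∩ K).card ≤ 2)
    {F : Type*} [Field F] [CharP F 2] [Fintype F] (hF : Fintype.card F = q)
    (p : Finset X) (hp : p ∈ P) (vec : X → (Fin 3 → F))
    (form : Finset X → Module.Dual F (Fin 3 → F))
    (h1 : ∀ x ∈ p, ∀ y ∈ p, x ≠ y → ∃ w, D3 (vec x) (vec y) w ≠ 0)
    (h2 : ∀ l ∈ L, l ⊆ p → ∀ y ∈ p, form l (vec y) = 0 ↔ y ∈ l)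
    (x : X) (hx : x ∈ p) (hxK : x ∉ K)
    (hbi : ∃ l ∈ L, l ⊆ p ∧ x ∈ l ∧ (l ∩ K).card = 2) :
    ((Tan L K).filter (fun l => x ∈ l ∧ l ⊆ p)).card + (p ∩ K).card ≤ q + 2 := by
  have vinj : ∀ y ∈ p, ∀ z ∈ p, vec y = vec z → y = z := by
    intro y hy z hz h
    by_contra hne
    obtain ⟨w, hw⟩ := h1 y hy z hz hne
    rw [h] at hw
    exact hw (by simp only [D3]; ring)
  have hTL : ∀ l ∈ Tan L K, l ∈ L ∧ (l ∩ K).card = 1 := fun l hl => mem_filter.mp hl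
  have hT1 : ∀ l ∈ Tan L K, ∀ y ∈ l, ∀ z ∈ l, y ∈ K → z ∈ K → y = z := by
    intro l hl y hy z hz hyK hzK
    exact card_le_one.mp (hTL l hl).2.le y (mem_inter.mpr ⟨hy, hyK⟩) z (mem_inter.mpr ⟨hz, hzK⟩)
  have finj : ∀ l ∈ L, ∀ l' ∈ L, l ⊆ p → l' ⊆ p → ∀ c : F, form l = c • form l' → l = l' := by
    intro l hl l' hl' hlp hlp' c h
    symm
    refine eq_of_subset_of_card_le ?_ (by rw [G.line_card l hl, G.line_card l' hl'])
    intro y hy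
    rw [← h2 l hl hlp y (hlp' hy), h, LinearMap.smul_apply, (h2 l' hl' hlp' y (hlp' hy)).mpr hy,
      smul_zero]
  have hvK : Set.InjOn vec (p ∩ K : Finset X) := by
    intro y hy z hz h
    exact vinj y (mem_inter.mp hy).1 z (mem_inter.mp hz).1 h
  have hA : ((p ∩ K).image vec).card = (p ∩ K).card := card_image_of_injOn hvK
  have hAm : ∀ a ∈ (p ∩ K).image vec, ∃ y, y ∈ p ∧ y ∈ K ∧ vec y = a := by
    intro a ha
    obtain ⟨y, hy, rfl⟩ := mem_image.mp ha
    exact ⟨y, (mem_inter.mp hy).1, (mem_inter.mp hy).2, rfl⟩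
  set U : (Fin 3 → F) → Finset (Module.Dual F (Fin 3 → F)) := fun v =>
    ((Tan L K).filter (fun l => l ⊆ p ∧ form l v = 0)).image form with hU
  have hUm : ∀ y ∈ p, ∀ u ∈ U (vec y), ∃ l ∈ Tan L K, l ⊆ p ∧ y ∈ l ∧ u = form l := by
    intro y hy u hu
    obtain ⟨l, hl, rfl⟩ := mem_image.mp hu
    obtain ⟨a1, a2, a3⟩ := mem_filter.mp hl
    exact ⟨l, a1, a2, (h2 l (hTL l a1).1 a2 y hy).mp a3, rfl⟩
  have main := arc_main ((p ∩ K).image vec) U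
    (by
      intro a ha b hb c hc hab hac hbc
      obtain ⟨ya, a1, a2, rfl⟩ := hAm a ha
      obtain ⟨yb, b1, b2, rfl⟩ := hAm b hb
      obtain ⟨yc, c1, c2, rfl⟩ := hAm c hc
      have nab : ya ≠ yb := fun h => hab (by rw [h])
      have nac : ya ≠ yc := fun h => hac (by rw [h])
      have nbc : yb ≠ yc := fun h => hbc (by rw [h])
      intro h0
      obtain ⟨l, hl, la, lb⟩ := G.join ya yb nab
      have hlp := G.plane_closed p hp l hl ya yb nab la lb a1 b1
      obtain ⟨w, hw⟩ := h1 ya a1 yb b1 nab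
      have e := D3_form (form l) (vec ya) (vec yb) (vec yc) w ((h2 l hl hlp ya a1).mpr la)
      have e' := D3_form (form l) (vec ya) (vec yb) w (vec yc) ((h2 l hl hlp ya a1).mpr la)
      rw [(h2 l hl hlp yb b1).mpr lb, h0] at e'
      rw [zero_mul, zero_add, mul_zero] at e'
      have := (mul_eq_zero.mp e').resolve_right hw
      have lc := (h2 l hl hlp yc c1).mp this
      have h3 := hcap l hl
      have : 2 < (l ∩ K).card := two_lt_card.mpr ⟨ya, mem_inter.mpr ⟨la, a2⟩, yb,
        mem_inter.mpr ⟨lb, b2⟩, yc, mem_inter.mpr ⟨lc, c2⟩, nab, nac, nbc⟩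
      omega)
    (by
      intro a ha u hu
      obtain ⟨l, hl, rfl⟩ := mem_image.mp hu
      exact (mem_filter.mp hl).2.2)
    (by
      intro a ha u hu b hb hba h0
      obtain ⟨ya, a1, a2, rfl⟩ := hAm a ha
      obtain ⟨yb, b1, b2, rfl⟩ := hAm b hb
      obtain ⟨l, hl, hlp, hal, rfl⟩ := hUm ya a1 u hu
      have := (h2 l (hTL l hl).1 hlp yb b1).mp h0
      exact hba (by rw [hT1 l hl yb this ya hal b2 a2]))
    (by
      intro a ha u hu v hv c h
      obtain ⟨ya, a1, a2, rfl⟩ := hAm a ha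
      obtain ⟨l, hl, hlp, hal, rfl⟩ := hUm ya a1 u hu
      obtain ⟨l', hl', hlp', hal', rfl⟩ := hUm ya a1 v hv
      rw [finj l (hTL l hl).1 l' (hTL l' hl').1 hlp hlp' c h])
    (by
      intro a ha
      obtain ⟨ya, a1, a2, rfl⟩ := hAm a ha
      rw [hA, hF, ← pg_tan_plane G K hcap hp ya a1 a2, hU]
      congr 1
      rw [card_image_of_injOn]
      · congr 1
        refine filter_congr fun l hl => ?_
        constructor
        · rintro ⟨i1, i2⟩
          exact ⟨(h2 l (hTL l hl).1 i1 ya a1).mp i2, i1⟩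
        · rintro ⟨i1, i2⟩
          exact ⟨i2, (h2 l (hTL l hl).1 i2 ya a1).mpr i1⟩
      · intro l hl l' hl' h
        have k1 := mem_filter.mp (mem_coe.mp hl)
        have k2 := mem_filter.mp (mem_coe.mp hl')
        exact finj l (hTL l k1.1).1 l' (hTL l' k2.1).1 k1.2.1 k2.2.1 1 (by rw [one_smul]; exact h))
    (vec x)
    (by
      intro a ha
      obtain ⟨ya, a1, a2, rfl⟩ := hAm a ha
      obtain ⟨w, hw⟩ := h1 ya a1 x hx (fun h => hxK (h ▸ a2))
      exact ⟨w, by rwa [D3_s2]⟩)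
    (by
      obtain ⟨l, hl, hlp, hxl, hc⟩ := hbi
      obtain ⟨y, hy⟩ := card_pos.mp (show 0 < (l ∩ K).card by omega)
      rw [mem_inter] at hy
      refine ⟨vec y, mem_image.mpr ⟨y, mem_inter.mpr ⟨hlp hy.1, hy.2⟩, rfl⟩, ?_⟩
      intro u hu h0
      obtain ⟨l', hl', hlp', hal', rfl⟩ := hUm y (hlp hy.1) u hu
      have hxl' := (h2 l' (hTL l' hl').1 hlp' x hx).mp h0
      have := G.line_uniq l hl l' (hTL l' hl').1 x y (fun h => hxK (h ▸ hy.2)) hxl hy.1 hxl' hal'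
      rw [this, (hTL l' hl').2] at hc
      omega)
  rw [hA, hF] at main
  refine le_trans (Nat.add_le_add_right ?_ _) main
  have hpt : ∀ l : Finset X, ∃ y, l ∈ Tan L K → y ∈ l ∧ y ∈ K := by
    intro l
    by_cases hl : l ∈ Tan L K
    · obtain ⟨y, hy⟩ := card_pos.mp (show 0 < (l ∩ K).card by rw [(hTL l hl).2]; omega)
      exact ⟨y, fun _ => mem_inter.mp hy⟩
    · exact ⟨x, fun h => absurd h hl⟩
  choose pt hpt using hpt
  refine card_le_card_of_injOn (fun l => vec (pt l)) ?_ ?_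
  · intro l hl
    obtain ⟨hl, hxl, hlp⟩ := mem_filter.mp (mem_coe.mp hl)
    obtain ⟨k1, k2⟩ := hpt l hl
    refine mem_coe.mpr (mem_filter.mpr ⟨mem_image.mpr ⟨pt l, mem_inter.mpr ⟨hlp k1, k2⟩, rfl⟩, ?_⟩)
    refine ⟨form l, mem_image.mpr ⟨l, mem_filter.mpr ⟨hl, hlp, ?_⟩, rfl⟩, ?_⟩
    · exact (h2 l (hTL l hl).1 hlp _ (hlp k1)).mpr k1
    · exact (h2 l (hTL l hl).1 hlp _ hx).mpr hxl
  · intro l hl l' hl' h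
    obtain ⟨hl, hxl, hlp⟩ := mem_filter.mp (mem_coe.mp hl)
    obtain ⟨hl', hxl', hlp'⟩ := mem_filter.mp (mem_coe.mp hl')
    obtain ⟨k1, k2⟩ := hpt l hl
    obtain ⟨k1', k2'⟩ := hpt l' hl'
    have e := vinj _ (hlp k1) _ (hlp' k1') h
    exact G.line_uniq l (hTL l hl).1 l' (hTL l' hl').1 x (pt l) (fun h => hxK (h ▸ k2)) hxl k1 hxl'
      (e ▸ k1')
end HARC

section CONC
open Classical

variable {F : Type*} [Field F] [Fintype F] {V : Type*} [AddCommGroup V] [Module F V]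
  [FiniteDimensional F V] [Fintype (Projectivization F V)]

/-- points in a subspace -/
noncomputable def pts (W : Submodule F V) : Finset (Projectivization F V) :=
  univ.filter (fun x => x.submodule ≤ W)

omit [Fintype F] [FiniteDimensional F V] in
theorem mem_pts (W : Submodule F V) (x : Projectivization F V) : x ∈ pts W ↔ x.submodule ≤ W := by
  simp [pts]

omit [FiniteDimensional F V] in
theorem pts_card (W : Submodule F V) (n : ℕ) (hn : Module.finrank F W = n) :
    (pts W).card = ∑ i ∈ range n, Fintype.card F ^ i := by
  have h := Projectivization.card_of_finrank F W hn
  rw [← Nat.card_eq_fintype_card (α := F), ← h]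
  have hinj := Projectivization.map_injective W.subtype W.injective_subtype
  rw [← Nat.card_range_of_injective hinj, Nat.card_coe_set_eq, ← Set.ncard_coe_finset]
  congr 1
  ext x
  rw [mem_coe, mem_pts, Set.mem_range]
  constructor
  · intro hx
    rw [Projectivization.submodule_eq, Submodule.span_singleton_le_iff_mem] at hx
    refine ⟨Projectivization.mk F ⟨x.rep, hx⟩ (fun h => x.rep_nonzero (congrArg Subtype.val h)), ?_⟩
    rw [Projectivization.map_mk]
    exact x.mk_rep
  · rintro ⟨y, rfl⟩
    induction y using Projectivization.ind with
    | h v hv =>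
      rw [Projectivization.map_mk, Projectivization.submodule_mk,
        Submodule.span_singleton_le_iff_mem]
      exact v.2

omit [Fintype F] [FiniteDimensional F V] in
theorem mk_mem_pts (W : Submodule F V) (v : V) (hv : v ≠ 0) :
    Projectivization.mk F v hv ∈ pts W ↔ v ∈ W := by
  rw [mem_pts, Projectivization.submodule_mk, Submodule.span_singleton_le_iff_mem]

omit [Fintype F] [FiniteDimensional F V] in
theorem pts_subset (W W' : Submodule F V) : pts W ⊆ pts W' ↔ W ≤ W' := by
  constructor
  · intro h v hv
    by_cases h0 : v = 0
    · rw [h0]; exact W'.zero_mem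
    · exact (mk_mem_pts W' v h0).mp (h ((mk_mem_pts W v h0).mpr hv))
  · intro h x hx
    rw [mem_pts] at hx ⊢
    exact hx.trans h

omit [Fintype F] [FiniteDimensional F V] in
theorem pts_inf (W W' : Submodule F V) : pts (W ⊓ W') = pts W ∩ pts W' := by
  ext x; simp only [mem_inter, mem_pts, le_inf_iff]

omit [Fintype F] in
theorem rank_add (W : Submodule F V) (x : Projectivization F V) (hx : x ∉ pts W) :
    Module.finrank F ↥(W ⊔ x.submodule) = Module.finrank F W + 1 := by
  have h := Submodule.finrank_sup_add_finrank_inf_eq W x.submodule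
  rw [x.finrank_submodule] at h
  have h1 : Module.finrank F ↥(W ⊓ x.submodule) < 1 := by
    rw [← x.finrank_submodule]
    refine Submodule.finrank_lt_finrank_of_lt (lt_of_le_of_ne inf_le_right ?_)
    intro h
    exact hx ((mem_pts W x).mpr (inf_eq_right.mp h))
  omega

omit [Fintype F] in
theorem rank_join (x y : Projectivization F V) (hxy : x ≠ y) :
    Module.finrank F ↥(x.submodule ⊔ y.submodule) = 2 := by
  rw [rank_add, x.finrank_submodule]
  rw [mem_pts]
  intro h
  exact hxy (Projectivization.submodule_injective (Submodule.eq_of_le_of_finrank_eq h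
    (by rw [x.finrank_submodule, y.finrank_submodule]))).symm

/-- rank n flats -/
noncomputable def Fl (F V : Type*) [Field F] [AddCommGroup V] [Module F V]
    [Fintype (Projectivization F V)] (n : ℕ) : Finset (Finset (Projectivization F V)) :=
  univ.filter (fun s => ∃ W : Submodule F V, Module.finrank F W = n ∧ pts W = s)

omit [Fintype F] [FiniteDimensional F V] in
theorem mem_Fl (n : ℕ) (s : Finset (Projectivization F V)) :
    s ∈ Fl F V n ↔ ∃ W : Submodule F V, Module.finrank F W = n ∧ pts W = s := by
  simp [Fl]

theorem conc_PG3 (hV : Module.finrank F V = 4) :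
    PG3 (Fintype.card F) (Fl F V 2) (Fl F V 3) := by
  have key : ∀ (W W' : Submodule F V) (x y : Projectivization F V), x ≠ y →
      Module.finrank F W = 2 → x ∈ pts W → y ∈ pts W → x ∈ pts W' → y ∈ pts W' → W ≤ W' := by
    intro W W' x y hxy hW h1 h2 h3 h4
    rw [mem_pts] at h1 h2 h3 h4
    have : x.submodule ⊔ y.submodule = W := Submodule.eq_of_le_of_finrank_eq (sup_le h1 h2)
      (by rw [rank_join x y hxy, hW])
    rw [← this]; exact sup_le h3 h4
  constructor
  · intro l hl
    obtain ⟨W, hW, rfl⟩ := (mem_Fl _ _).mp hl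
    rw [pts_card W 2 hW]; simp [sum_range_succ]; ring
  · intro x y hxy
    refine ⟨pts (x.submodule ⊔ y.submodule), (mem_Fl _ _).mpr ⟨_, rank_join x y hxy, rfl⟩, ?_, ?_⟩
    · rw [mem_pts]; exact le_sup_left
    · rw [mem_pts]; exact le_sup_right
  · intro l hl l' hl' x y hxy h1 h2 h3 h4
    obtain ⟨W, hW, rfl⟩ := (mem_Fl _ _).mp hl
    obtain ⟨W', hW', rfl⟩ := (mem_Fl _ _).mp hl'
    rw [le_antisymm (key W W' x y hxy hW h1 h2 h3 h4) (key W' W x y hxy hW' h3 h4 h1 h2)]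
  · intro p hp l hl x y hxy h1 h2 h3 h4
    obtain ⟨W, hW, rfl⟩ := (mem_Fl _ _).mp hl
    obtain ⟨W', hW', rfl⟩ := (mem_Fl _ _).mp hp
    exact (pts_subset _ _).mpr (key W W' x y hxy hW h1 h2 h3 h4)
  · intro l hl x hx
    obtain ⟨W, hW, rfl⟩ := (mem_Fl _ _).mp hl
    refine ⟨pts (W ⊔ x.submodule), (mem_Fl _ _).mpr ⟨_, by rw [rank_add W x hx, hW], rfl⟩, ?_, ?_⟩
    · rw [pts_subset]; exact le_sup_left
    · rw [mem_pts]; exact le_sup_right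
  · intro l hl x hx p hp p' hp' h1 h2 h3 h4
    obtain ⟨W, hW, rfl⟩ := (mem_Fl _ _).mp hl
    obtain ⟨Z, hZ, rfl⟩ := (mem_Fl _ _).mp hp
    obtain ⟨Z', hZ', rfl⟩ := (mem_Fl _ _).mp hp'
    rw [pts_subset] at h1 h3
    rw [mem_pts] at h2 h4
    have hr := rank_add W x hx
    rw [← Submodule.eq_of_le_of_finrank_eq (sup_le h1 h2) (by rw [hr, hW, hZ]),
      ← Submodule.eq_of_le_of_finrank_eq (sup_le h3 h4) (by rw [hr, hW, hZ'])]
  · intro p hp l hl l' hl' h1 h2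
    obtain ⟨W, hW, rfl⟩ := (mem_Fl _ _).mp hl
    obtain ⟨W', hW', rfl⟩ := (mem_Fl _ _).mp hl'
    obtain ⟨Z, hZ, rfl⟩ := (mem_Fl _ _).mp hp
    rw [pts_subset] at h1 h2
    have h := Submodule.finrank_sup_add_finrank_inf_eq W W'
    have h3 := Submodule.finrank_mono (sup_le h1 h2)
    have h4 : W ⊓ W' ≠ ⊥ := by
      intro h0
      rw [h0, finrank_bot] at h
      omega
    obtain ⟨v, hv, hv0⟩ := Submodule.exists_mem_ne_zero_of_ne_bot h4
    exact ⟨Projectivization.mk F v hv0, (mk_mem_pts _ _ _).mpr hv.1, (mk_mem_pts _ _ _).mpr hv.2⟩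
  · intro p hp p' hp' hne
    obtain ⟨Z, hZ, rfl⟩ := (mem_Fl _ _).mp hp
    obtain ⟨Z', hZ', rfl⟩ := (mem_Fl _ _).mp hp'
    refine (mem_Fl _ _).mpr ⟨Z ⊓ Z', ?_, pts_inf Z Z'⟩
    have h := Submodule.finrank_sup_add_finrank_inf_eq Z Z'
    have h1 : Module.finrank F ↥(Z ⊔ Z') ≤ 4 := hV ▸ Submodule.finrank_le _
    have h2 : Module.finrank F Z < Module.finrank F ↥(Z ⊔ Z') := by
      refine Submodule.finrank_lt_finrank_of_lt (lt_of_le_of_ne le_sup_left ?_)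
      intro h3
      have h4 : Z' ≤ Z := by rw [h3]; exact le_sup_right
      exact hne (by rw [Submodule.eq_of_le_of_finrank_eq h4 (by rw [hZ, hZ'])])
    omega
  · intro l hl
    obtain ⟨W, hW, rfl⟩ := (mem_Fl _ _).mp hl
    rw [pts_card W 3 hW]; simp [sum_range_succ]; ring
  · rw [← Nat.card_eq_fintype_card, Projectivization.card_of_finrank F V hV]
    simp [sum_range_succ]; ring
  · have : 1 < Fintype.card F := Fintype.one_lt_card
    omega

omit [Fintype F] in
theorem conc_coord (p : Finset (Projectivization F V)) (hp : p ∈ Fl F V 3) :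
    ∃ (vec : Projectivization F V → (Fin 3 → F))
      (form : Finset (Projectivization F V) → Module.Dual F (Fin 3 → F)),
    (∀ x ∈ p, ∀ y ∈ p, x ≠ y → ∃ w, D3 (vec x) (vec y) w ≠ 0) ∧
    (∀ l ∈ Fl F V 2, l ⊆ p → ∀ y ∈ p, form l (vec y) = 0 ↔ y ∈ l) := by
  obtain ⟨Z, hZ, rfl⟩ := (mem_Fl _ _).mp hp
  let e : Z ≃ₗ[F] (Fin 3 → F) := LinearEquiv.ofFinrankEq _ _ (by rw [hZ]; simp)
  obtain ⟨φ, hφ⟩ := LinearMap.exists_extend e.toLinearMap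
  have hφe : ∀ v (hv : v ∈ Z), φ v = e ⟨v, hv⟩ := by
    intro v hv
    have := LinearMap.congr_fun hφ ⟨v, hv⟩
    simpa using this
  have hinj : ∀ v ∈ Z, ∀ w ∈ Z, φ v = φ w → v = w := by
    intro v hv w hw h
    rw [hφe v hv, hφe w hw] at h
    have := e.injective h
    simpa using this
  have hrep : ∀ x : Projectivization F V, ∀ W : Submodule F V, x ∈ pts W ↔ x.rep ∈ W := by
    intro x W
    rw [mem_pts, Projectivization.submodule_eq, Submodule.span_singleton_le_iff_mem]
  have hform : ∀ l : Finset (Projectivization F V), ∃ u : Module.Dual F (Fin 3 → F),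
      l ∈ Fl F V 2 → l ⊆ pts Z → ∀ y ∈ pts Z, u (φ y.rep) = 0 ↔ y ∈ l := by
    intro l
    by_cases hl : l ∈ Fl F V 2 ∧ l ⊆ pts Z
    · obtain ⟨hl, hlp⟩ := hl
      obtain ⟨W, hW, rfl⟩ := (mem_Fl _ _).mp hl
      rw [pts_subset] at hlp
      have hr : Module.finrank F (W.map φ) = 2 := by
        rw [← hW]
        have hi : Function.Injective (φ.domRestrict W) := by
          intro v w h
          exact Subtype.ext (hinj v (hlp v.2) w (hlp w.2) h)
        rw [← LinearMap.range_domRestrict]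
        exact LinearMap.finrank_range_of_inj hi
      have hlt : W.map φ < ⊤ := by
        rw [lt_top_iff_ne_top]
        intro h
        rw [h, finrank_top] at hr
        simp at hr
      obtain ⟨u, hu0, hu⟩ := Submodule.exists_le_ker_of_lt_top _ hlt
      have hk : W.map φ = LinearMap.ker u := by
        refine Submodule.eq_of_le_of_finrank_le hu ?_
        have : Module.finrank F (LinearMap.ker u) < Module.finrank F (Fin 3 → F) := by
          refine Submodule.finrank_lt ?_
          intro h
          exact hu0 (LinearMap.ker_eq_top.mp h)
        simp at this
        omega
      refine ⟨u, fun _ _ y hy => ?_⟩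
      rw [← LinearMap.mem_ker, ← hk, hrep, Submodule.mem_map]
      constructor
      · rintro ⟨v, hv, h⟩
        rw [← hinj v (hlp hv) y.rep ((hrep y Z).mp hy) h]
        exact hv
      · intro h
        exact ⟨_, h, rfl⟩
    · exact ⟨0, fun h1 h2 => absurd ⟨h1, h2⟩ hl⟩
  choose form hform using hform
  refine ⟨fun x => φ x.rep, form, ?_, fun l h1 h2 => hform l h1 h2⟩
  intro x hx y hy hxy
  by_contra hcon
  push Not at hcon
  have hx' := (hrep x Z).mp hx
  have hy' := (hrep y Z).mp hy
  have e0 := hcon ![1, 0, 0]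
  have e1 := hcon ![0, 1, 0]
  have e2 := hcon ![0, 0, 1]
  simp [D3] at e0 e1 e2
  have hne : φ x.rep ≠ 0 := by
    intro h
    exact x.rep_nonzero (hinj _ hx' 0 Z.zero_mem (by rw [h, map_zero]))
  obtain ⟨i, hi⟩ := Function.ne_iff.mp hne
  have hij : ∀ j, φ x.rep i * φ y.rep j = φ y.rep i * φ x.rep j := by
    clear hi
    have a01 : φ x.rep 0 * φ y.rep 1 = φ y.rep 0 * φ x.rep 1 := by linear_combination e2
    have a02 : φ x.rep 0 * φ y.rep 2 = φ y.rep 0 * φ x.rep 2 := by linear_combination -e1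
    have a12 : φ x.rep 1 * φ y.rep 2 = φ y.rep 1 * φ x.rep 2 := by linear_combination e0
    intro j
    match i, j with
    | 0, 0 => exact mul_comm _ _
    | 1, 1 => exact mul_comm _ _
    | 2, 2 => exact mul_comm _ _
    | 0, 1 => exact a01
    | 0, 2 => exact a02
    | 1, 2 => exact a12
    | 1, 0 => linear_combination -a01
    | 2, 0 => linear_combination -a02
    | 2, 1 => linear_combination -a12
  have hprop : φ (φ x.rep i • y.rep) = φ (φ y.rep i • x.rep) := by
    rw [map_smul, map_smul]
    funext j
    exact hij j
  have hv := hinj _ (Z.smul_mem _ hy') _ (Z.smul_mem _ hx') hprop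
  apply hxy
  symm
  apply Projectivization.submodule_injective
  refine Submodule.eq_of_le_of_finrank_eq ?_ (by rw [x.finrank_submodule, y.finrank_submodule])
  rw [← mem_pts, hrep, Projectivization.submodule_eq, Submodule.mem_span_singleton]
  refine ⟨(φ x.rep i)⁻¹ * φ y.rep i, ?_⟩
  rw [mul_smul, ← hv, smul_smul, inv_mul_cancel₀ hi, one_smul]
end CONC

section FIN
open Classical

theorem fin_aux (F : Type*) [Field F] [Fintype F] (q : ℕ) (hcard : Fintype.card F = q)
    (hqeven : Even q) (hq : 2048 ≤ q)
    (K : Set (PGPoint F 3)) (hK : IsCompleteCap K) (hk : K.ncard < q ^ 2 + 1)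
    (hcon : q ^ 2 + 137 ≤ K.ncard + 2 * q) : False := by
  have hfin : Finite (PGPoint F 3) :=
    (Projectivization.finite_iff_of_finite F (Fin (3 + 1) → F)).mpr inferInstance
  haveI : Fintype (PGPoint F 3) := Fintype.ofFinite _
  have hV : Module.finrank F (Fin (3 + 1) → F) = 4 := by simp
  have G := conc_PG3 (F := F) hV
  rw [hcard] at G
  haveI : CharP F 2 := by
    obtain ⟨p, hp⟩ := CharP.exists F
    haveI := hp
    obtain ⟨n, hpp, hn⟩ := FiniteField.card F p
    rw [hcard] at hn
    rw [hn, Nat.even_pow] at hqeven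
    have := (Nat.Prime.even_iff hpp).mp hqeven.1
    rwa [this] at hp
  set K' : Finset (PGPoint F 3) := K.toFinset with hK'
  have hKm : ∀ x, x ∈ K' ↔ x ∈ K := fun x => by rw [hK', Set.mem_toFinset]
  have hKc : K.ncard = K'.card := by rw [hK', Set.ncard_eq_toFinset_card']
  obtain ⟨hcap0, hcomp0⟩ := hK
  have hcap : ∀ l ∈ Fl F (Fin (3 + 1) → F) 2, (l ∩ K').card ≤ 2 := by
    intro l hl
    obtain ⟨W, hW, rfl⟩ := (mem_Fl _ _).mp hl
    by_contra h
    push Not at h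
    obtain ⟨a, ha, b, hb, c, hc, hab, hac, hbc⟩ := two_lt_card.mp h
    rw [mem_inter, hKm, mem_pts] at ha hb hc
    refine hcap0 a ha.2 b hb.2 c hc.2 hab hac hbc ?_
    unfold Coll3
    rw [← hW]
    exact Submodule.finrank_mono (sup_le (sup_le ha.1 hb.1) hc.1)
  have hcomp : ∀ x, x ∉ K' → ∃ l ∈ Fl F (Fin (3 + 1) → F) 2, x ∈ l ∧ (l ∩ K').card = 2 := by
    intro x hx
    have hfind : ∃ a ∈ K, ∃ b ∈ K, a ≠ b ∧ x.submodule ⊔ (a.submodule ⊔ b.submodule) ≤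
        a.submodule ⊔ b.submodule := by
      have h := hcomp0 x (fun h => hx ((hKm x).mpr h))
      unfold IsCap at h
      push Not at h
      obtain ⟨a, ha, b, hb, c, hc, hab, hac, hbc, h⟩ := h
      unfold Coll3 at h
      have hh : ∀ a b : PGPoint F 3, a ≠ b → Module.finrank F
          ↥(x.submodule ⊔ (a.submodule ⊔ b.submodule)) ≤ 2 →
          x.submodule ⊔ (a.submodule ⊔ b.submodule) ≤ a.submodule ⊔ b.submodule := by
        intro a b hab h
        exact (Submodule.eq_of_le_of_finrank_le le_sup_right
          (by rw [rank_join a b hab]; exact h)).symm.le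
      rw [Set.mem_insert_iff] at ha hb hc
      rcases ha with rfl | ha
      · refine ⟨b, hb.resolve_left hab.symm, c, hc.resolve_left hac.symm, hbc, hh b c hbc ?_⟩
        rwa [← sup_assoc]
      · rcases hb with rfl | hb
        · refine ⟨a, ha, c, hc.resolve_left hbc.symm, hac, hh a c hac ?_⟩
          rwa [← sup_assoc, sup_comm b.submodule]
        · rcases hc with rfl | hc
          · refine ⟨a, ha, b, hb, hab, hh a b hab ?_⟩
            rwa [sup_comm]
          · exact absurd h (hcap0 a ha b hb c hc hab hac hbc)
    obtain ⟨a, ha, b, hb, hab, h⟩ := hfind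
    have hl : pts (a.submodule ⊔ b.submodule) ∈ Fl F (Fin (3 + 1) → F) 2 :=
      (mem_Fl _ _).mpr ⟨_, rank_join a b hab, rfl⟩
    refine ⟨_, hl, (mem_pts _ _).mpr (le_sup_left.trans h), le_antisymm (hcap _ hl) ?_⟩
    refine one_lt_card.mpr ⟨a, ?_, b, ?_, hab⟩
    · rw [mem_inter, hKm, mem_pts]; exact ⟨le_sup_left, ha⟩
    · rw [mem_inter, hKm, mem_pts]; exact ⟨le_sup_right, hb⟩
  have harc : ∀ p ∈ Fl F (Fin (3 + 1) → F) 3, ∀ x ∈ p, x ∉ K' →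
      (∃ l ∈ Fl F (Fin (3 + 1) → F) 2, l ⊆ p ∧ x ∈ l ∧ (l ∩ K').card = 2) →
      ((Tan (Fl F (Fin (3 + 1) → F) 2) K').filter (fun l => x ∈ l ∧ l ⊆ p)).card +
        (p ∩ K').card ≤ q + 2 := by
    intro p hp x hx hxK hbi
    obtain ⟨vec, form, h1, h2⟩ := conc_coord p hp
    exact pg_harc G K' hcap hcard p hp vec form h1 h2 x hx hxK hbi
  rw [hKc] at hk hcon
  refine pg_final G K' hcap hcomp harc hq (q ^ 2 + q + 2 - K'.card) ?_ ?_ ?_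
  · omega
  · omega
  · omega
end FIN

end AUX

theorem stmt8 (F : Type*) [Field F] [Fintype F] (q : ℕ) (hcard : Fintype.card F = q)
    (hqeven : Even q) (hq : 2048 ≤ q)
    (K : Set (PGPoint F 3)) (hK : IsCompleteCap K) (hk : K.ncard < q ^ 2 + 1) :
    (K.ncard : ℝ) < (q : ℝ) ^ 2 - 2 * (q : ℝ) + 3 * Real.sqrt q + 2 := by
  by_contra hcon
  push Not at hcon
  have hs : (45 : ℝ) ≤ Real.sqrt q := by
    apply Real.le_sqrt_of_sq_le
    have : (2048 : ℝ) ≤ q := by exact_mod_cast hq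
    linarith
  refine fin_aux F q hcard hqeven hq K hK hk ?_
  have : ((q ^ 2 + 137 : ℕ) : ℝ) ≤ ((K.ncard + 2 * q : ℕ) : ℝ) := by
    push_cast
    linarith
  exact_mod_cast this
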